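/- arXiv:1607.04442 — 4 statements merged into one kernel-verified Lean document; each statement's English description precedes it below -/
import Mathlib

section
/- Let n ≥ 1, 1 ≤ p < ∞ and 0 ≤ λ ≤ n. If f belongs to the homogeneous Morrey space L^{p,λ}(ℝⁿ) and satisfies the vanishing property (V⁰), and φ ∈ L¹(ℝⁿ), then the convolution f ∗ φ belongs to L^{p,λ}(ℝⁿ) and satisfies (V⁰). -/
/-!
Young's inequality in its local form gives everything: with `Φ = ∫ |φ|`, Hölder's inequality for the
measure `|φ| dz` yields `|f ∗ φ|^p (y) ≤ Φ^(p-1) ∫ |f (y - z)|^p |φ z| dz`, and integrating over a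
ball `B(x,r)` and exchanging integrals bounds `∫_{B(x,r)} |f ∗ φ|^p` by
`Φ^p sup_{x'} ∫_{B(x',r)} |f|^p` (`lintegral_ball_conv_le`). Since the radius is unchanged, both the
Morrey bound and the vanishing property pass from `f` to `f ∗ φ`.

The delicate point is measurability. The hypothesis on `f` only makes `|f|` almost everywhere
measurable, not `f` itself, while `f ∗ φ` has to be shown measurable. The space splits into a
measurable set `Dᶜ` on which `f` is a.e. measurable and a measurable set `D` such that `f` is not
a.e. measurable on any non-null measurable subset of `D` (`exists_nonmeasurable_core`). Hence
`y ↦ f y * φ (x - y)` is a.e. measurable only if `{y ∈ D | φ (x - y) ≠ 0}` is null; this is a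
measurable condition on `x`. Where it holds, `f ∗ φ` agrees with the convolution of the measurable
function `f · 1_{Dᶜ}` with `φ`; where it fails, the Bochner integral takes the value `0`
(`measurable_conv`).
-/

open MeasureTheory Metric Filter Topology

/-- The Morrey quantity `𝔐_{p,λ}(f;x,r) = r^{-λ} ∫_{B(x,r)} |f(y)|^p dy`. -/
noncomputable def morreyM (n : ℕ) (p lam : ℝ) (f : EuclideanSpace ℝ (Fin n) → ℝ)
    (x : EuclideanSpace ℝ (Fin n)) (r : ℝ) : ℝ :=
  r ^ (-lam) * ∫ y in ball x r, |f y| ^ p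

/-- Local `p`-integrability: `|f|^p` is integrable on every ball. -/
def LocIntPow (n : ℕ) (p : ℝ) (f : EuclideanSpace ℝ (Fin n) → ℝ) : Prop :=
  ∀ (x : EuclideanSpace ℝ (Fin n)) (r : ℝ), 0 < r →
    IntegrableOn (fun y => |f y| ^ p) (ball x r) volume

/-- Membership in the homogeneous Morrey space `L^{p,λ}(ℝⁿ)`. -/
def MemMorrey (n : ℕ) (p lam : ℝ) (f : EuclideanSpace ℝ (Fin n) → ℝ) : Prop :=
  LocIntPow n p f ∧ ∃ C : ℝ, ∀ x r, 0 < r → morreyM n p lam f x r ≤ C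

/-- The homogeneous Morrey norm `‖f‖_{p,λ}`. -/
noncomputable def morreyNorm (n : ℕ) (p lam : ℝ) (f : EuclideanSpace ℝ (Fin n) → ℝ) : ℝ :=
  sSup {c : ℝ | ∃ x r, 0 < r ∧ c = morreyM n p lam f x r} ^ (1 / p)

/-- The vanishing property `(V⁰)` at the origin. -/
def VZero (n : ℕ) (p lam : ℝ) (f : EuclideanSpace ℝ (Fin n) → ℝ) : Prop :=
  Tendsto (fun r : ℝ => ⨆ x, morreyM n p lam f x r) (nhdsWithin 0 (Set.Ioi 0)) (nhds 0)

/-- The vanishing property `(V^∞)` at infinity. -/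
def VInfty (n : ℕ) (p lam : ℝ) (f : EuclideanSpace ℝ (Fin n) → ℝ) : Prop :=
  Tendsto (fun r : ℝ => ⨆ x, morreyM n p lam f x r) atTop (nhds 0)

/-- `𝒜_{N,p}(f) = sup_x ∫_{B(x,1)} |f(y)|^p χ_{{|y| ≥ N}}(y) dy`. -/
noncomputable def morreyA (n : ℕ) (p : ℝ) (N : ℝ) (f : EuclideanSpace ℝ (Fin n) → ℝ) : ℝ :=
  ⨆ x, ∫ y in ball x 1 ∩ {y : EuclideanSpace ℝ (Fin n) | N ≤ ‖y‖}, |f y| ^ p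

/-- The vanishing property `(V*)`. -/
def VStar (n : ℕ) (p : ℝ) (f : EuclideanSpace ℝ (Fin n) → ℝ) : Prop :=
  Tendsto (fun N : ℕ => morreyA n p (N : ℝ) f) atTop (nhds 0)

/-- Convolution `(f ∗ g)(x) = ∫ f(x - z) g(z) dz`. -/
noncomputable def conv (n : ℕ) (f g : EuclideanSpace ℝ (Fin n) → ℝ)
    (x : EuclideanSpace ℝ (Fin n)) : ℝ :=
  ∫ z, f (x - z) * g z

/-- If `|f|` is a.e. measurable, then `f` is a.e. measurable off a measurable set `D` on no non-null
measurable part of which it is a.e. measurable. The set `D` is the intersection of the measurable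
hulls of `{f > 0}` and `{f < 0}`. -/
lemma exists_nonmeasurable_core {α : Type*} [MeasurableSpace α] {μ : Measure α} [SFinite μ]
    {f : α → ℝ} (hf : AEMeasurable (fun x => |f x|) μ) :
    ∃ D : Set α, MeasurableSet D ∧ AEMeasurable f (μ.restrict Dᶜ) ∧
      ∀ S, MeasurableSet S → S ⊆ D → AEMeasurable f (μ.restrict S) → μ S = 0 := by
  set P := toMeasurable μ {x | 0 < f x} with hP
  set N := toMeasurable μ {x | f x < 0} with hN
  have mP : MeasurableSet P := measurableSet_toMeasurable _ _
  have mN : MeasurableSet N := measurableSet_toMeasurable _ _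
  refine ⟨P ∩ N, mP.inter mN, ?_, ?_⟩
  · rw [Set.compl_inter, aemeasurable_union_iff]
    constructor
    · refine (hf.restrict.neg : AEMeasurable _ (μ.restrict Pᶜ)).congr ?_
      filter_upwards [ae_restrict_mem mP.compl] with x hx
      have : ¬ 0 < f x := fun h => hx (subset_toMeasurable μ _ h)
      simp [abs_of_nonpos (not_lt.mp this)]
    · refine (hf.restrict : AEMeasurable _ (μ.restrict Nᶜ)).congr ?_
      filter_upwards [ae_restrict_mem mN.compl] with x hx
      have : ¬ f x < 0 := fun h => hx (subset_toMeasurable μ _ h)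
      simp [abs_of_nonneg (not_lt.mp this)]
  · rintro S mS hS ⟨g, mg, hg⟩
    rw [EventuallyEq, ae_restrict_iff' mS, ae_iff] at hg
    -- `S` lies in both hulls, so a measurable subset of `S` missing `{f > 0}` is null,
    -- and `S` has the measure of `{f < 0} ∩ S`, which is a.e. equal to `T`.
    set T := {x | g x < 0} ∩ S with hT
    have mT : MeasurableSet T := (measurableSet_lt mg measurable_const).inter mS
    have hT0 : μ T = 0 := by
      have h1 : P ∩ T = T := Set.inter_eq_right.2 fun x hx => (hS hx.2).1
      rw [← h1, hP, Measure.measure_toMeasurable_inter_of_sFinite mT]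
      refine measure_mono_null ?_ hg
      rintro x ⟨hx, hx', hxS⟩
      simp only [Set.mem_ofPred_eq] at hx hx' ⊢
      intro h
      linarith [h hxS]
    have h1 : N ∩ S = S := Set.inter_eq_right.2 fun x hx => (hS hx).2
    rw [← h1, hN, Measure.measure_toMeasurable_inter_of_sFinite mS]
    refine measure_mono_null ?_ (measure_union_null hg hT0)
    rintro x ⟨hx, hxS⟩
    by_cases h : f x = g x
    · exact Or.inr ⟨by simpa [← h] using hx, hxS⟩
    · exact Or.inl fun h' => h (h' hxS)

/-- The convolution is measurable even if only `|f|` is a.e. measurable. -/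
lemma measurable_conv {n : ℕ} {f φ : EuclideanSpace ℝ (Fin n) → ℝ}
    (hf : AEMeasurable (fun x => |f x|) volume) (hφ : AEMeasurable φ volume) :
    Measurable (conv n f φ) := by
  obtain ⟨D, mD, hfD, hD⟩ := exists_nonmeasurable_core hf
  obtain ⟨ψ, mψ, hψ⟩ := hφ
  obtain ⟨g, mg, hg⟩ := hfD
  have hconv : ∀ x, conv n f φ x = ∫ y, f y * ψ (x - y) := by
    intro x
    rw [conv, ← integral_sub_left_eq_self (fun y => f y * ψ (x - y)) volume x]
    refine integral_congr_ae ?_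
    filter_upwards [hψ] with z hz
    simp [hz]
  set A : Set (EuclideanSpace ℝ (Fin n) × EuclideanSpace ℝ (Fin n)) :=
    {q | q.2 ∈ D ∧ ψ (q.1 - q.2) ≠ 0} with hA
  have mψ2 : Measurable fun q : EuclideanSpace ℝ (Fin n) × EuclideanSpace ℝ (Fin n) =>
      ψ (q.1 - q.2) := mψ.comp (measurable_fst.sub measurable_snd)
  have mA : MeasurableSet A :=
    (measurable_snd mD).inter (mψ2 (measurableSet_singleton 0).compl)
  set E : Set (EuclideanSpace ℝ (Fin n)) := {x | volume (Prod.mk x ⁻¹' A) = 0} with hE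
  have mE : MeasurableSet E :=
    (measurable_measure_prodMk_left (ν := volume) mA) (measurableSet_singleton 0)
  have key : conv n f φ = E.indicator fun x => ∫ y, Dᶜ.indicator g y * ψ (x - y) := by
    funext x
    rw [hconv]
    by_cases hx : x ∈ E
    · rw [Set.indicator_of_mem hx]
      refine integral_congr_ae ?_
      have hx' : ∀ᵐ y ∂(volume : Measure (EuclideanSpace ℝ (Fin n))), y ∉ Prod.mk x ⁻¹' A :=
        measure_eq_zero_iff_ae_notMem.1 hx
      rw [EventuallyEq, ae_restrict_iff' mD.compl] at hg
      filter_upwards [hx', hg] with y hy hgy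
      by_cases hyD : y ∈ D
      · have : ψ (x - y) = 0 := by
          by_contra h
          exact hy ⟨hyD, h⟩
        simp [this]
      · rw [Set.indicator_of_mem (show y ∈ Dᶜ from hyD), hgy hyD]
    · rw [Set.indicator_of_notMem hx]
      -- Dividing by `ψ (x - ·)` recovers `f` on the slice of `A`, so integrability would make
      -- `f` a.e. measurable there and force that slice to be null.
      refine integral_undef fun hint => hx ?_
      have mS : MeasurableSet (Prod.mk x ⁻¹' A) := measurable_prodMk_left mA
      refine hD _ mS (fun y hy => hy.1) ?_
      have hm : AEMeasurable (fun y => f y * ψ (x - y) * (ψ (x - y))⁻¹) volume :=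
        hint.aestronglyMeasurable.aemeasurable.mul
          (mψ.comp (measurable_const.sub measurable_id)).inv.aemeasurable
      refine (hm.restrict : AEMeasurable _ (volume.restrict (Prod.mk x ⁻¹' A))).congr ?_
      filter_upwards [ae_restrict_mem mS] with y hy
      exact mul_inv_cancel_right₀ hy.2 _
  rw [key]
  refine Measurable.indicator ?_ mE
  refine StronglyMeasurable.measurable ?_
  refine StronglyMeasurable.integral_prod_right' (f := fun q :
    EuclideanSpace ℝ (Fin n) × EuclideanSpace ℝ (Fin n) =>
      Dᶜ.indicator g q.2 * ψ (q.1 - q.2)) ?_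
  exact (((mg.indicator mD.compl).comp measurable_snd).mul mψ2).stronglyMeasurable

/-- Hölder's inequality for the measure with density `w`, in the form of Jensen's inequality. -/
lemma lintegral_mul_rpow_le {α : Type*} [MeasurableSpace α] {μ : Measure α} {p : ℝ} (hp : 1 ≤ p)
    {F w : α → ENNReal} (hF : AEMeasurable F μ) (hw : AEMeasurable w μ) :
    (∫⁻ z, F z * w z ∂μ) ^ p ≤ (∫⁻ z, F z ^ p * w z ∂μ) * (∫⁻ z, w z ∂μ) ^ (p - 1) := by
  have hp0 : 0 < p := by linarith
  have hq : 0 ≤ 1 - 1 / p := by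
    rw [sub_nonneg, div_le_one hp0]
    exact hp
  have h := ENNReal.lintegral_mul_norm_pow_le ((hF.pow_const p).mul hw) hw
    (p := 1 / p) (q := 1 - 1 / p) (by positivity) hq (by ring)
  have e : ∀ z, (F z ^ p * w z) ^ (1 / p) * w z ^ (1 - 1 / p) = F z * w z := by
    intro z
    rw [ENNReal.mul_rpow_of_nonneg _ _ (by positivity), ← ENNReal.rpow_mul,
      mul_one_div_cancel hp0.ne', ENNReal.rpow_one, mul_assoc,
      ← ENNReal.rpow_add_of_nonneg _ _ (by positivity) hq]
    simp
  simp only [Pi.mul_apply, e] at h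
  calc _ ≤ ((∫⁻ z, F z ^ p * w z ∂μ) ^ (1 / p) * (∫⁻ z, w z ∂μ) ^ (1 - 1 / p)) ^ p := by
        gcongr
    _ = _ := by
        rw [ENNReal.mul_rpow_of_nonneg _ _ hp0.le, ← ENNReal.rpow_mul, ← ENNReal.rpow_mul,
          one_div_mul_cancel hp0.ne', ENNReal.rpow_one]
        congr 2
        field_simp

/-- Local Young inequality: the `L^p` mass of `f ∗ φ` on balls of radius `r` is controlled by that
of `f` on balls of the same radius. -/
lemma lintegral_ball_conv_le {n : ℕ} {p : ℝ} (hp : 1 ≤ p) {f φ : EuclideanSpace ℝ (Fin n) → ℝ}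
    (hf : AEMeasurable (fun x => |f x|) volume) (hφ : AEMeasurable φ volume) {r : ℝ}
    {K : ENNReal} (hK : ∀ x, ∫⁻ y in ball x r, ‖f y‖ₑ ^ p ≤ K) (x : EuclideanSpace ℝ (Fin n)) :
    ∫⁻ y in ball x r, ‖conv n f φ y‖ₑ ^ p ≤ (∫⁻ z, ‖φ z‖ₑ) ^ p * K := by
  have hp0 : 0 < p := by linarith
  have hfe : AEMeasurable (fun x => ‖f x‖ₑ) volume := by
    refine hf.enorm.congr (Eventually.of_forall fun x => ?_)
    simp
  obtain ⟨F, mF, hF⟩ := hfe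
  have hφe : AEMeasurable (fun x => ‖φ x‖ₑ) volume := hφ.enorm
  obtain ⟨w, mw, hw⟩ := hφe
  have hqmp : ∀ x : EuclideanSpace ℝ (Fin n),
      Measure.QuasiMeasurePreserving (fun y => x - y) volume volume := fun x =>
    (Measure.measurePreserving_sub_left volume x).quasiMeasurePreserving
  have mF2 : Measurable fun q : EuclideanSpace ℝ (Fin n) × EuclideanSpace ℝ (Fin n) =>
      F (q.1 - q.2) := mF.comp (measurable_fst.sub measurable_snd)
  set Φ := ∫⁻ z, ‖φ z‖ₑ with hΦ
  have hΦw : ∫⁻ z, w z = Φ := lintegral_congr_ae hw.symm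
  have pt : ∀ y, ‖conv n f φ y‖ₑ ^ p ≤ (∫⁻ z, F (y - z) ^ p * w z) * Φ ^ (p - 1) := by
    intro y
    have h1 : ‖conv n f φ y‖ₑ ≤ ∫⁻ z, F (y - z) * w z := by
      refine (enorm_integral_le_lintegral_enorm _).trans_eq (lintegral_congr_ae ?_)
      filter_upwards [hw, (hqmp y).ae_eq_comp hF] with z hz hz'
      simp only [Function.comp_apply] at hz'
      rw [enorm_mul, hz, hz']
    calc _ ≤ (∫⁻ z, F (y - z) * w z) ^ p := by gcongr
      _ ≤ _ := by
        rw [← hΦw]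
        exact lintegral_mul_rpow_le hp
          (mF.comp (measurable_const.sub measurable_id)).aemeasurable mw.aemeasurable
  have inner : ∀ z, ∫⁻ y in ball x r, F (y - z) ^ p ≤ K := by
    intro z
    refine le_trans (le_of_eq ?_) (hK (x - z))
    have e1 : ∫⁻ y in ball (x - z) r, ‖f y‖ₑ ^ p = ∫⁻ y in ball (x - z) r, F y ^ p := by
      refine lintegral_congr_ae (ae_restrict_of_ae ?_)
      filter_upwards [hF] with y hy
      rw [hy]
    rw [e1, ← lintegral_indicator measurableSet_ball, ← lintegral_indicator measurableSet_ball,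
      ← lintegral_sub_right_eq_self ((ball (x - z) r).indicator _) z]
    refine lintegral_congr fun y => ?_
    have : y - z ∈ ball (x - z) r ↔ y ∈ ball x r := by simp [mem_ball]
    by_cases hy : y ∈ ball x r
    · rw [Set.indicator_of_mem hy, Set.indicator_of_mem (this.2 hy)]
    · rw [Set.indicator_of_notMem hy, Set.indicator_of_notMem (fun h => hy (this.1 h))]
  have mFw : Measurable fun q : EuclideanSpace ℝ (Fin n) × EuclideanSpace ℝ (Fin n) =>
      F (q.1 - q.2) ^ p * w q.2 := (mF2.pow_const p).mul (mw.comp measurable_snd)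
  calc ∫⁻ y in ball x r, ‖conv n f φ y‖ₑ ^ p
      ≤ ∫⁻ y in ball x r, (∫⁻ z, F (y - z) ^ p * w z) * Φ ^ (p - 1) := lintegral_mono pt
    _ = (∫⁻ y in ball x r, ∫⁻ z, F (y - z) ^ p * w z) * Φ ^ (p - 1) :=
        lintegral_mul_const _ mFw.lintegral_prod_right'
    _ = (∫⁻ z, ∫⁻ y in ball x r, F (y - z) ^ p * w z) * Φ ^ (p - 1) := by
        rw [lintegral_lintegral_swap mFw.aemeasurable]
    _ = (∫⁻ z, (∫⁻ y in ball x r, F (y - z) ^ p) * w z) * Φ ^ (p - 1) := by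
        congr 1
        refine lintegral_congr fun z => lintegral_mul_const _ ?_
        exact (mF.comp (measurable_id.sub measurable_const)).pow_const p
    _ ≤ (∫⁻ z, K * w z) * Φ ^ (p - 1) := by
        gcongr with z
        exact inner z
    _ = Φ ^ p * K := by
        rw [lintegral_const_mul _ mw, hΦw, mul_assoc]
        nth_rewrite 1 [← ENNReal.rpow_one Φ]
        rw [← ENNReal.rpow_add_of_nonneg _ _ zero_le_one (by linarith), mul_comm]
        simp

lemma LocIntPow.aemeasurable_abs {n : ℕ} {p : ℝ} (hp : 1 ≤ p) {f : EuclideanSpace ℝ (Fin n) → ℝ}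
    (hf : LocIntPow n p f) : AEMeasurable (fun x => |f x|) volume := by
  have hp0 : p ≠ 0 := by linarith
  have h : AEMeasurable (fun x => |f x| ^ p) volume := by
    rw [← Measure.restrict_univ (μ := (volume : Measure (EuclideanSpace ℝ (Fin n)))),
      ← Metric.iUnion_ball_nat_succ (0 : EuclideanSpace ℝ (Fin n)), aemeasurable_iUnion_iff]
    exact fun k => (hf 0 _ (by positivity)).aestronglyMeasurable.aemeasurable
  refine (h.pow_const p⁻¹).congr (Eventually.of_forall fun x => ?_)
  exact Real.rpow_rpow_inv (abs_nonneg _) hp0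

/-- The local Young inequality for real-valued integrals, together with local integrability. -/
lemma conv_ball_bound {n : ℕ} {p : ℝ} (hp : 1 ≤ p) {f φ : EuclideanSpace ℝ (Fin n) → ℝ}
    (hf : LocIntPow n p f) (hφ : Integrable φ) {r K : ℝ} (hr : 0 < r)
    (hK : ∀ x, ∫ y in ball x r, |f y| ^ p ≤ K) (x : EuclideanSpace ℝ (Fin n)) :
    IntegrableOn (fun y => |conv n f φ y| ^ p) (ball x r) volume ∧
      ∫ y in ball x r, |conv n f φ y| ^ p ≤ (∫ z, |φ z|) ^ p * K := by
  have hp0 : 0 ≤ p := by linarith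
  have hK0 : 0 ≤ K := (integral_nonneg fun y => by positivity).trans (hK 0)
  have hΦ0 : 0 ≤ ∫ z, |φ z| := integral_nonneg fun z => abs_nonneg _
  have habs := hf.aemeasurable_abs hp
  have en : ∀ t : ℝ, ENNReal.ofReal (|t| ^ p) = ‖t‖ₑ ^ p := fun t => by
    rw [← ENNReal.ofReal_rpow_of_nonneg (abs_nonneg t) hp0, ← Real.norm_eq_abs, ofReal_norm]
  have hKe : ∀ x, ∫⁻ y in ball x r, ‖f y‖ₑ ^ p ≤ ENNReal.ofReal K := by
    intro x
    refine le_trans (le_of_eq ?_) (ENNReal.ofReal_le_ofReal (hK x))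
    rw [ofReal_integral_eq_lintegral_ofReal (hf x r hr)
      (Eventually.of_forall fun y => by positivity)]
    exact lintegral_congr fun y => (en _).symm
  have hΦ : ∫⁻ z, ‖φ z‖ₑ = ENNReal.ofReal (∫ z, |φ z|) := by
    rw [← ofReal_integral_norm_eq_lintegral_enorm hφ]
    rfl
  have hmain := lintegral_ball_conv_le hp habs hφ.aestronglyMeasurable.aemeasurable hKe x
  rw [hΦ, ENNReal.ofReal_rpow_of_nonneg hΦ0 hp0, ← ENNReal.ofReal_mul (by positivity)] at hmain
  simp only [← en] at hmain
  have hm : AEStronglyMeasurable (fun y => |conv n f φ y| ^ p) (volume.restrict (ball x r)) :=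
    ((measurable_conv habs hφ.aestronglyMeasurable.aemeasurable).abs.pow_const
      p).aestronglyMeasurable
  have hnn : 0 ≤ᵐ[volume.restrict (ball x r)] fun y => |conv n f φ y| ^ p :=
    Eventually.of_forall fun y => by positivity
  refine ⟨⟨hm, ?_⟩, ?_⟩
  · rw [hasFiniteIntegral_iff_ofReal hnn]
    exact hmain.trans_lt ENNReal.ofReal_lt_top
  · rw [integral_eq_lintegral_of_nonneg_ae hnn hm]
    exact ENNReal.toReal_le_of_le_ofReal (by positivity) hmain

/-- A bound for the Morrey quantity of `f`, uniform in the centre, passes to `f ∗ φ` at the same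
radius. -/
lemma morreyM_conv_le {n : ℕ} {p lam : ℝ} (hp : 1 ≤ p) {f φ : EuclideanSpace ℝ (Fin n) → ℝ}
    (hf : LocIntPow n p f) (hφ : Integrable φ) {r C : ℝ} (hr : 0 < r)
    (hC : ∀ x, morreyM n p lam f x r ≤ C) (x : EuclideanSpace ℝ (Fin n)) :
    IntegrableOn (fun y => |conv n f φ y| ^ p) (ball x r) volume ∧
      morreyM n p lam (conv n f φ) x r ≤ (∫ z, |φ z|) ^ p * C := by
  have hrl : 0 < r ^ (-lam) := Real.rpow_pos_of_pos hr _
  obtain ⟨h1, h2⟩ := conv_ball_bound hp hf hφ hr (K := C / r ^ (-lam))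
    (fun x => by rw [le_div_iff₀' hrl]; exact hC x) x
  refine ⟨h1, ?_⟩
  calc morreyM n p lam (conv n f φ) x r
      ≤ r ^ (-lam) * ((∫ z, |φ z|) ^ p * (C / r ^ (-lam))) := by
        rw [morreyM]
        gcongr
    _ = _ := by field_simp

lemma morreyM_nonneg (n : ℕ) (p lam : ℝ) (f : EuclideanSpace ℝ (Fin n) → ℝ)
    (x : EuclideanSpace ℝ (Fin n)) {r : ℝ} (hr : 0 < r) : 0 ≤ morreyM n p lam f x r :=
  mul_nonneg (Real.rpow_nonneg hr.le _) (integral_nonneg fun y => by positivity)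

theorem vzero_convolution_invariant (n : ℕ) (hn : 1 ≤ n) (p lam : ℝ)
    (hp : 1 ≤ p) (hl0 : 0 ≤ lam) (hln : lam ≤ (n : ℝ))
    (f φ : EuclideanSpace ℝ (Fin n) → ℝ)
    (hf : MemMorrey n p lam f) (hf0 : VZero n p lam f) (hφ : Integrable φ) :
    MemMorrey n p lam (conv n f φ) ∧ VZero n p lam (conv n f φ) := by
  obtain ⟨hloc, C, hC⟩ := hf
  refine ⟨⟨fun x r hr => (morreyM_conv_le hp hloc hφ hr (fun x => hC x r hr) x).1,
    (∫ z, |φ z|) ^ p * C,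
    fun x r hr => (morreyM_conv_le hp hloc hφ hr (fun x => hC x r hr) x).2⟩, ?_⟩
  have hlim := hf0.const_mul ((∫ z, |φ z|) ^ p)
  rw [mul_zero] at hlim
  refine tendsto_of_tendsto_of_tendsto_of_le_of_le' tendsto_const_nhds hlim ?_ ?_
  · filter_upwards [self_mem_nhdsWithin] with r hr
    exact Real.iSup_nonneg fun x => morreyM_nonneg n p lam _ x hr
  · filter_upwards [self_mem_nhdsWithin] with r hr
    have hbdd : BddAbove (Set.range fun x => morreyM n p lam f x r) :=
      ⟨C, by rintro _ ⟨x, rfl⟩; exact hC x r hr⟩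
    exact ciSup_le fun x => (morreyM_conv_le hp hloc hφ hr (fun x => le_ciSup hbdd x) x).2
end

section
/- Let n ≥ 1, 1 ≤ p < ∞ and 0 < λ < n. Let e₁ = (1,0,…,0) ∈ ℝⁿ and define φ(x) = Σ_{k=2}^{∞} χ_{B(2^k e₁, 1)}(x), the sum of the characteristic functions of the unit balls centered at 2^k e₁ for k ≥ 2. Then φ belongs to the homogeneous Morrey space L^{p,λ}(ℝⁿ), φ satisfies both vanishing properties (V⁰) and (V^∞), but φ does not satisfy the vanishing property (V*); indeed 𝒜_{N,p}(φ) ≥ |B(0,1)| for every N ∈ ℕ. -/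
/-!
The centres `2 ^ (k + 2) • e₁` are at mutual distance at least `4`, so the unit balls around them
are disjoint; hence `φ`, and also `|φ| ^ p`, is the indicator function of their union `U`, and
`𝔐(φ; x, r) = r ^ (-λ) |B(x, r) ∩ U|`.

* For small `r` the bound `|B(x, r) ∩ U| ≤ |B(x, r)| = rⁿ |B(0, 1)|` gives `(V⁰)`, as `λ < n`.
* For `r ≥ 1` the ball `B(x, r)` meets only `O(1 + log r)` of the unit balls: if `j` is the least
  index of a ball that it meets, any other index `k` satisfies
  `2 ^ (k + 1) ≤ 2 ^ (k + 2) - 2 ^ (j + 2) < 2 (r + 1)` (`measure_inter_union_le`). Since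
  `log r = O(r ^ (λ / 2))`, the Morrey quantity is `O(r ^ (-λ / 2))`, which gives `(V^∞)` and,
  together with the bound for small `r`, membership in the Morrey space.
* Each unit ball far enough from the origin contributes its full volume `|B(0, 1)|` to
  `𝒜_{N,p}(φ)`, so `(V*)` fails.
-/

open MeasureTheory Metric Filter Topology

/-! ### Geometry of the unit balls -/

/-- The union of the unit balls centred at `2 ^ (k + 2) • e`, `k ≥ 0`. -/
def dyadicBalls {n : ℕ} (e : EuclideanSpace ℝ (Fin n)) : Set (EuclideanSpace ℝ (Fin n)) :=
  ⋃ k : ℕ, ball (((2 : ℝ) ^ (k + 2)) • e) 1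

section

variable {n : ℕ} {e : EuclideanSpace ℝ (Fin n)}

lemma measurableSet_dyadicBalls : MeasurableSet (dyadicBalls e) :=
  MeasurableSet.iUnion fun _ => measurableSet_ball

lemma dist_centres (he : ‖e‖ = 1) (j k : ℕ) :
    dist (((2 : ℝ) ^ j) • e) (((2 : ℝ) ^ k) • e) = |(2 : ℝ) ^ j - 2 ^ k| := by
  rw [dist_eq_norm, ← sub_smul, norm_smul, he, mul_one, Real.norm_eq_abs]

lemma two_pow_le_sub {j k : ℕ} (h : j < k) : (2 : ℝ) ^ (k + 1) ≤ 2 ^ (k + 2) - 2 ^ (j + 2) := by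
  have : (2 : ℝ) ^ (j + 2) ≤ 2 ^ (k + 1) := pow_le_pow_right₀ (by norm_num) (by omega)
  rw [pow_succ _ (k + 1)]
  linarith

lemma centre_index_unique (he : ‖e‖ = 1) {y : EuclideanSpace ℝ (Fin n)} {j k : ℕ}
    (hj : y ∈ ball (((2 : ℝ) ^ (j + 2)) • e) 1) (hk : y ∈ ball (((2 : ℝ) ^ (k + 2)) • e) 1) :
    j = k := by
  wlog h : j < k generalizing j k
  · rcases (not_lt.1 h).lt_or_eq with h' | h'
    · exact (this hk hj h').symm
    · exact h'.symm
  have h1 := dist_triangle_left (((2 : ℝ) ^ (k + 2)) • e) (((2 : ℝ) ^ (j + 2)) • e) y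
  rw [dist_centres he] at h1
  rw [mem_ball] at hj hk
  have h2 := two_pow_le_sub h
  have h3 := le_abs_self ((2 : ℝ) ^ (k + 2) - 2 ^ (j + 2))
  have h4 : (2 : ℝ) ^ 1 ≤ 2 ^ (k + 1) := pow_le_pow_right₀ (by norm_num) (by omega)
  linarith

lemma tsum_indicator_eq (he : ‖e‖ = 1) (x : EuclideanSpace ℝ (Fin n)) :
    ∑' k : ℕ, Set.indicator (ball (((2 : ℝ) ^ (k + 2)) • e) 1) (fun _ => (1 : ℝ)) x
      = (dyadicBalls e).indicator (fun _ => (1 : ℝ)) x := by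
  by_cases hx : x ∈ dyadicBalls e
  · rw [Set.indicator_of_mem hx]
    obtain ⟨j, hj⟩ := Set.mem_iUnion.1 hx
    rw [tsum_eq_single j, Set.indicator_of_mem hj]
    intro k hk
    exact Set.indicator_of_notMem (fun h => hk (centre_index_unique he h hj)) _
  · rw [Set.indicator_of_notMem hx]
    have : ∀ k : ℕ,
        Set.indicator (ball (((2 : ℝ) ^ (k + 2)) • e) 1) (fun _ => (1 : ℝ)) x = 0 :=
      fun k => Set.indicator_of_notMem (fun h => hx (Set.mem_iUnion.2 ⟨k, h⟩)) _
    simp [this]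

/-- A ball of radius `r ≥ 1` meets at most logarithmically many of the unit balls. -/
lemma measure_inter_union_le (he : ‖e‖ = 1) (x : EuclideanSpace ℝ (Fin n)) {r : ℝ} (hr : 1 ≤ r) :
    volume.real (ball x r ∩ dyadicBalls e) ≤
      (2 + 2 * Real.log (2 * r)) * volume.real (ball (0 : EuclideanSpace ℝ (Fin n)) 1) := by
  have hlog : 0 ≤ Real.log (2 * r) := Real.log_nonneg (by linarith)
  by_cases hex : ∃ k : ℕ, dist (((2 : ℝ) ^ (k + 2)) • e) x < r + 1
  swap
  · have : ball x r ∩ dyadicBalls e = ∅ := by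
      refine Set.eq_empty_of_forall_notMem fun y hy => hex ?_
      obtain ⟨k, hk⟩ := Set.mem_iUnion.1 hy.2
      have h1 := dist_triangle_left (((2 : ℝ) ^ (k + 2)) • e) x y
      have h2 := mem_ball.1 hy.1
      have h3 := mem_ball.1 hk
      exact ⟨k, by linarith⟩
    rw [this, measureReal_empty]
    positivity
  classical
  set j := Nat.find hex with hj
  have hjx : dist (((2 : ℝ) ^ (j + 2)) • e) x < r + 1 := Nat.find_spec hex
  set m := ⌊2 * Real.log (2 * r)⌋₊
  set T : Finset ℕ := insert j (Finset.range (m + 1)) with hT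
  have hsub : ball x r ∩ dyadicBalls e ⊆ ⋃ k ∈ T, ball (((2 : ℝ) ^ (k + 2)) • e) 1 := by
    rintro y ⟨hy, hyU⟩
    obtain ⟨k, hk⟩ := Set.mem_iUnion.1 hyU
    refine Set.mem_iUnion₂.2 ⟨k, ?_, hk⟩
    have hkx : dist (((2 : ℝ) ^ (k + 2)) • e) x < r + 1 := by
      have h1 := dist_triangle_left (((2 : ℝ) ^ (k + 2)) • e) x y
      have h2 := mem_ball.1 hy
      have h3 := mem_ball.1 hk
      linarith
    have hjk : j ≤ k := Nat.find_min' hex hkx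
    rcases hjk.eq_or_lt with h | h
    · simp [hT, h]
    have h1 := dist_triangle_right (((2 : ℝ) ^ (k + 2)) • e) (((2 : ℝ) ^ (j + 2)) • e) x
    rw [dist_centres he] at h1
    have h2 := two_pow_le_sub h
    have h3 := le_abs_self ((2 : ℝ) ^ (k + 2) - 2 ^ (j + 2))
    have h4 : (2 : ℝ) ^ k < 2 * r := by
      rw [pow_succ] at h2
      linarith
    have h5 : (k : ℝ) * Real.log 2 < Real.log (2 * r) := by
      rw [← Real.log_pow]
      exact Real.log_lt_log (by positivity) h4
    have h6 : (k : ℝ) ≤ 2 * Real.log (2 * r) := by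
      have := Real.log_two_gt_d9
      have h7 : (k : ℝ) * (1 / 2) ≤ k * Real.log 2 :=
        mul_le_mul_of_nonneg_left (by linarith) (Nat.cast_nonneg k)
      linarith
    have h8 : k ≤ m := Nat.le_floor h6
    simp only [hT, Finset.mem_insert, Finset.mem_range]
    omega
  have hfin : volume (⋃ k ∈ T, ball (((2 : ℝ) ^ (k + 2)) • e) 1) ≠ ⊤ :=
    ((measure_biUnion_finset_le T _).trans_lt
      (ENNReal.sum_lt_top.2 fun k _ => measure_ball_lt_top)).ne
  have hcard : (T.card : ℝ) ≤ 2 + 2 * Real.log (2 * r) := by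
    have h1 : T.card ≤ m + 1 + 1 := by
      simpa using Finset.card_insert_le j (Finset.range (m + 1))
    have h2 : (m : ℝ) ≤ 2 * Real.log (2 * r) := Nat.floor_le (by positivity)
    have h3 : (T.card : ℝ) ≤ m + 1 + 1 := by exact_mod_cast h1
    linarith
  calc volume.real (ball x r ∩ dyadicBalls e)
      ≤ volume.real (⋃ k ∈ T, ball (((2 : ℝ) ^ (k + 2)) • e) 1) := measureReal_mono hsub hfin
    _ ≤ ∑ k ∈ T, volume.real (ball (((2 : ℝ) ^ (k + 2)) • e) 1) :=
        measureReal_biUnion_finset_le T _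
    _ = T.card * volume.real (ball (0 : EuclideanSpace ℝ (Fin n)) 1) := by
        simp [measureReal_def, Measure.addHaar_ball_center]
    _ ≤ _ := mul_le_mul_of_nonneg_right hcard measureReal_nonneg

/-! ### Bounds on the Morrey quantity -/

variable {p lam : ℝ}

lemma abs_indicator_rpow (hp : 1 ≤ p) (s : Set (EuclideanSpace ℝ (Fin n))) :
    (fun y => |s.indicator (fun _ => (1 : ℝ)) y| ^ p) = s.indicator (fun _ => (1 : ℝ)) := by
  ext y
  by_cases hy : y ∈ s
  · simp [hy]
  · simp [hy, Real.zero_rpow (by linarith : p ≠ 0)]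

lemma setIntegral_indicator_rpow (hp : 1 ≤ p) (s : Set (EuclideanSpace ℝ (Fin n))) :
    ∫ y in s, |(dyadicBalls e).indicator (fun _ => (1 : ℝ)) y| ^ p
      = volume.real (s ∩ dyadicBalls e) := by
  rw [abs_indicator_rpow hp, setIntegral_indicator measurableSet_dyadicBalls]
  simp

lemma morreyM_indicator_nonneg (hp : 1 ≤ p) (x : EuclideanSpace ℝ (Fin n)) {r : ℝ} (hr : 0 < r) :
    0 ≤ morreyM n p lam ((dyadicBalls e).indicator fun _ => 1) x r := by
  rw [morreyM, setIntegral_indicator_rpow hp]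
  positivity

lemma morreyM_indicator_le_small (hp : 1 ≤ p) (x : EuclideanSpace ℝ (Fin n)) {r : ℝ}
    (hr : 0 < r) :
    morreyM n p lam ((dyadicBalls e).indicator fun _ => 1) x r ≤
      r ^ ((n : ℝ) - lam) * volume.real (ball (0 : EuclideanSpace ℝ (Fin n)) 1) := by
  rw [morreyM, setIntegral_indicator_rpow hp]
  have h1 : volume.real (ball x r ∩ dyadicBalls e) ≤ volume.real (ball x r) :=
    measureReal_mono Set.inter_subset_left measure_ball_lt_top.ne
  have h2 : volume.real (ball x r)
      = r ^ n * volume.real (ball (0 : EuclideanSpace ℝ (Fin n)) 1) := by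
    rw [measureReal_def, Measure.addHaar_ball_of_pos _ _ hr, ENNReal.toReal_mul,
      ENNReal.toReal_ofReal (by positivity), finrank_euclideanSpace_fin, measureReal_def]
  calc _ ≤ r ^ (-lam) * (r ^ n * volume.real (ball (0 : EuclideanSpace ℝ (Fin n)) 1)) := by
        rw [← h2]
        gcongr
    _ = _ := by
        rw [← mul_assoc, ← Real.rpow_natCast r n, ← Real.rpow_add hr]
        ring_nf

/-- The constant comes from `log (2 r) ≤ (2 r) ^ (λ / 2) / (λ / 2)`. -/
lemma morreyM_indicator_le_large (he : ‖e‖ = 1) (hp : 1 ≤ p) (hl : 0 < lam)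
    (x : EuclideanSpace ℝ (Fin n)) {r : ℝ} (hr : 1 ≤ r) :
    morreyM n p lam ((dyadicBalls e).indicator fun _ => 1) x r ≤
      r ^ (-(lam / 2)) * ((2 + 2 * (2 ^ (lam / 2) / (lam / 2))) *
        volume.real (ball (0 : EuclideanSpace ℝ (Fin n)) 1)) := by
  rw [morreyM, setIntegral_indicator_rpow hp]
  have hr0 : 0 < r := by linarith
  have h1 := measure_inter_union_le he x hr
  have h2 : Real.log (2 * r) ≤ (2 * r) ^ (lam / 2) / (lam / 2) :=
    Real.log_le_rpow_div (by positivity) (by positivity)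
  rw [Real.mul_rpow (by norm_num) hr0.le] at h2
  have h3 : 1 ≤ r ^ (lam / 2) := Real.one_le_rpow hr (by positivity)
  have h4 : 2 + 2 * Real.log (2 * r) ≤
      r ^ (lam / 2) * (2 + 2 * (2 ^ (lam / 2) / (lam / 2))) := by
    calc _ ≤ r ^ (lam / 2) * 2 + 2 * (2 ^ (lam / 2) * r ^ (lam / 2) / (lam / 2)) := by linarith
      _ = _ := by ring
  calc _ ≤ r ^ (-lam) * ((r ^ (lam / 2) * (2 + 2 * (2 ^ (lam / 2) / (lam / 2)))) *
        volume.real (ball (0 : EuclideanSpace ℝ (Fin n)) 1)) := by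
        gcongr
        exact h1.trans (mul_le_mul_of_nonneg_right h4 measureReal_nonneg)
    _ = _ := by
        have : r ^ (-(lam / 2)) = r ^ (-lam) * r ^ (lam / 2) := by
          rw [← Real.rpow_add hr0]
          ring_nf
        rw [this]
        ring

/-! ### Membership and vanishing properties -/

lemma memMorrey_indicator (he : ‖e‖ = 1) (hp : 1 ≤ p) (hl : 0 < lam) (hln : lam < n) :
    MemMorrey n p lam ((dyadicBalls e).indicator fun _ => 1) := by
  constructor
  · intro x r _
    rw [abs_indicator_rpow hp]
    exact (integrableOn_const measure_ball_lt_top.ne).indicator measurableSet_dyadicBalls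
  · refine ⟨max (volume.real (ball (0 : EuclideanSpace ℝ (Fin n)) 1))
      ((2 + 2 * (2 ^ (lam / 2) / (lam / 2))) *
        volume.real (ball (0 : EuclideanSpace ℝ (Fin n)) 1)), fun x r hr => ?_⟩
    rcases le_total r 1 with h | h
    · refine (morreyM_indicator_le_small hp x hr).trans (le_max_of_le_left ?_)
      exact mul_le_of_le_one_left measureReal_nonneg
        (Real.rpow_le_one hr.le h (by linarith))
    · refine (morreyM_indicator_le_large he hp hl x h).trans (le_max_of_le_right ?_)
      exact mul_le_of_le_one_left (by positivity)
        (Real.rpow_le_one_of_one_le_of_nonpos h (by linarith))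

lemma vZero_indicator (hp : 1 ≤ p) (hln : lam < n) :
    VZero n p lam ((dyadicBalls e).indicator fun _ => 1) := by
  have hlim : Tendsto (fun r : ℝ => r ^ ((n : ℝ) - lam) *
      volume.real (ball (0 : EuclideanSpace ℝ (Fin n)) 1)) (𝓝[>] 0) (𝓝 0) := by
    have h := (Real.continuousAt_rpow_const 0 ((n : ℝ) - lam) (Or.inr (by linarith))).tendsto
    rw [Real.zero_rpow (by linarith)] at h
    simpa using (h.mono_left nhdsWithin_le_nhds).mul_const _
  refine tendsto_of_tendsto_of_tendsto_of_le_of_le' tendsto_const_nhds hlim ?_ ?_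
  · filter_upwards [self_mem_nhdsWithin] with r hr
    exact Real.iSup_nonneg fun x => morreyM_indicator_nonneg hp x hr
  · filter_upwards [self_mem_nhdsWithin] with r hr
    exact ciSup_le fun x => morreyM_indicator_le_small hp x hr

lemma vInfty_indicator (he : ‖e‖ = 1) (hp : 1 ≤ p) (hl : 0 < lam) :
    VInfty n p lam ((dyadicBalls e).indicator fun _ => 1) := by
  have hlim : Tendsto (fun r : ℝ => r ^ (-(lam / 2)) * ((2 + 2 * (2 ^ (lam / 2) / (lam / 2))) *
      volume.real (ball (0 : EuclideanSpace ℝ (Fin n)) 1))) atTop (𝓝 0) := by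
    simpa using (tendsto_rpow_neg_atTop (half_pos hl)).mul_const
      ((2 + 2 * (2 ^ (lam / 2) / (lam / 2))) *
        volume.real (ball (0 : EuclideanSpace ℝ (Fin n)) 1))
  refine tendsto_of_tendsto_of_tendsto_of_le_of_le' tendsto_const_nhds hlim ?_ ?_
  · filter_upwards [eventually_ge_atTop 1] with r hr
    exact Real.iSup_nonneg fun x => morreyM_indicator_nonneg hp x (by linarith)
  · filter_upwards [eventually_ge_atTop 1] with r hr
    exact ciSup_le fun x => morreyM_indicator_le_large he hp hl x hr

lemma le_morreyA_indicator (he : ‖e‖ = 1) (hp : 1 ≤ p) (N : ℕ) :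
    volume.real (ball (0 : EuclideanSpace ℝ (Fin n)) 1) ≤
      morreyA n p N ((dyadicBalls e).indicator fun _ => 1) := by
  -- `N + 1 < 2 ^ (N + 2)`, so the ball of index `N` lies in `{‖y‖ ≥ N}`.
  have hsub : ball (((2 : ℝ) ^ (N + 2)) • e) 1 ⊆
      (ball (((2 : ℝ) ^ (N + 2)) • e) 1 ∩ {y | (N : ℝ) ≤ ‖y‖}) ∩ dyadicBalls e := by
    intro y hy
    refine ⟨⟨hy, ?_⟩, Set.mem_iUnion.2 ⟨N, hy⟩⟩
    have h1 : (N : ℝ) + 2 < 2 ^ (N + 2) := by exact_mod_cast Nat.lt_two_pow_self (n := N + 2)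
    have h2 : ‖((2 : ℝ) ^ (N + 2)) • e‖ = 2 ^ (N + 2) := by
      rw [norm_smul, he, mul_one, Real.norm_of_nonneg (by positivity)]
    have h3 := norm_sub_norm_le (((2 : ℝ) ^ (N + 2)) • e) y
    rw [mem_ball', dist_eq_norm] at hy
    change (N : ℝ) ≤ ‖y‖
    linarith
  have hfin (x : EuclideanSpace ℝ (Fin n)) : volume (ball x 1) ≠ ⊤ := measure_ball_lt_top.ne
  have hball (x : EuclideanSpace ℝ (Fin n)) :
      volume.real (ball x 1) = volume.real (ball (0 : EuclideanSpace ℝ (Fin n)) 1) := by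
    simp [measureReal_def, Measure.addHaar_ball_center]
  have hinc (x : EuclideanSpace ℝ (Fin n)) :
      (ball x 1 ∩ {y | (N : ℝ) ≤ ‖y‖}) ∩ dyadicBalls e ⊆ ball x 1 := fun y hy => hy.1.1
  simp only [morreyA, setIntegral_indicator_rpow hp]
  refine le_ciSup_of_le ⟨volume.real (ball (0 : EuclideanSpace ℝ (Fin n)) 1), ?_⟩
    (((2 : ℝ) ^ (N + 2)) • e) ?_
  · rintro _ ⟨x, rfl⟩
    exact (measureReal_mono (hinc x) (hfin x)).trans_eq (hball x)
  · rw [← hball (((2 : ℝ) ^ (N + 2)) • e)]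
    exact measureReal_mono hsub (measure_ne_top_of_subset (hinc _) (hfin _))

end

theorem example_phi_not_vstar (n : ℕ) (hn : 0 < n) (p lam : ℝ)
    (hp : 1 ≤ p) (hl0 : 0 < lam) (hln : lam < (n : ℝ))
    (e₁ : EuclideanSpace ℝ (Fin n)) (he₁ : e₁ = EuclideanSpace.single ⟨0, hn⟩ 1)
    (φ : EuclideanSpace ℝ (Fin n) → ℝ)
    (hφ : φ = fun x => ∑' k : ℕ,
      Set.indicator (ball (((2 : ℝ) ^ (k + 2)) • e₁) 1) (fun _ => (1 : ℝ)) x) :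
    MemMorrey n p lam φ ∧ VZero n p lam φ ∧ VInfty n p lam φ ∧
      ¬ VStar n p φ ∧
      ∀ N : ℕ,
        (volume (ball (0 : EuclideanSpace ℝ (Fin n)) 1)).toReal ≤ morreyA n p (N : ℝ) φ := by
  have he : ‖e₁‖ = 1 := by simp [he₁]
  have hφ' : φ = (dyadicBalls e₁).indicator fun _ => 1 := by
    rw [hφ]
    exact funext (tsum_indicator_eq he)
  subst hφ'
  refine ⟨memMorrey_indicator he hp hl0 hln, vZero_indicator hp hln,
    vInfty_indicator he hp hl0, fun h => ?_, le_morreyA_indicator he hp⟩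
  have hpos : 0 < volume.real (ball (0 : EuclideanSpace ℝ (Fin n)) 1) :=
    ENNReal.toReal_pos (measure_ball_pos _ _ one_pos).ne' measure_ball_lt_top.ne
  exact hpos.not_ge (ge_of_tendsto' h (le_morreyA_indicator he hp))
end

section
/- Let n ≥ 1, 1 ≤ p < ∞ and 0 ≤ λ < n. Suppose f belongs to the homogeneous Morrey space L^{p,λ}(ℝⁿ) and satisfies the three vanishing properties (V⁰), (V^∞) and (V*). For k ∈ ℕ let f_k := f · χ_{B(0,k)} be the truncation of f to the ball B(0,k). Then ‖f − f_k‖_{p,λ} → 0 as k → ∞; in particular f can be approximated in the Morrey norm by compactly supported functions. -/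
/-!
The remainder `f - f χ_{B(0,k)}` is `f` restricted to `{‖y‖ ≥ k}`, so its Morrey quantities are at
most those of `f` (`morreyM_tail_le`). Hence `(V⁰)` and `(V^∞)` make them at most `ε`, uniformly in
`k` and `x`, for radii outside some compact interval `[a, b] ⊆ (0, ∞)`. For a radius `r ∈ [a, b]`
the ball `B(x, r)` is covered by `m` unit balls with `m` depending on `b` only, so the Morrey
quantity is at most `a^{-λ} · m · 𝒜_{k,p}(f)` (`exists_tail_integral_le`), which tends to `0` by
`(V*)`.
-/

open MeasureTheory Metric Filter Topology

/-- The `p`-th power of the truncation remainder is `|f|^p` cut off to `{k ≤ ‖y‖}`; `p ≠ 0` is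
needed because `0 ^ 0 = 1`. -/
lemma abs_tail_rpow {n : ℕ} {p : ℝ} (hp : p ≠ 0) (f : EuclideanSpace ℝ (Fin n) → ℝ) (k : ℕ)
    (y : EuclideanSpace ℝ (Fin n)) :
    |f y - Set.indicator (ball (0 : EuclideanSpace ℝ (Fin n)) k) f y| ^ p =
      Set.indicator {y : EuclideanSpace ℝ (Fin n) | (k : ℝ) ≤ ‖y‖} (fun y => |f y| ^ p) y := by
  by_cases h : (k : ℝ) ≤ ‖y‖
  · have h1 : y ∉ ball (0 : EuclideanSpace ℝ (Fin n)) k := by simpa using h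
    rw [Set.indicator_of_notMem h1, Set.indicator_of_mem (by exact h), sub_zero]
  · have h1 : y ∈ ball (0 : EuclideanSpace ℝ (Fin n)) k := by simpa using h
    rw [Set.indicator_of_mem h1, Set.indicator_of_notMem (by exact h), sub_self, abs_zero,
      Real.zero_rpow hp]

lemma measurableSet_norm_ge (n k : ℕ) :
    MeasurableSet {y : EuclideanSpace ℝ (Fin n) | (k : ℝ) ≤ ‖y‖} :=
  measurableSet_le measurable_const measurable_norm

lemma morreyM_tail {n : ℕ} {p : ℝ} (hp : p ≠ 0) (lam : ℝ) (f : EuclideanSpace ℝ (Fin n) → ℝ)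
    (k : ℕ) (x : EuclideanSpace ℝ (Fin n)) (r : ℝ) :
    morreyM n p lam (fun y => f y - Set.indicator (ball (0 : EuclideanSpace ℝ (Fin n)) k) f y) x r
      = r ^ (-lam) * ∫ y in ball x r ∩ {y | (k : ℝ) ≤ ‖y‖}, |f y| ^ p := by
  unfold morreyM
  simp only [abs_tail_rpow hp]
  rw [setIntegral_indicator (measurableSet_norm_ge n k)]

lemma morreyM_tail_le {n : ℕ} {p : ℝ} (hp : p ≠ 0) (lam : ℝ)
    {f : EuclideanSpace ℝ (Fin n) → ℝ} (hf : LocIntPow n p f)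
    (k : ℕ) (x : EuclideanSpace ℝ (Fin n)) {r : ℝ} (hr : 0 < r) :
    morreyM n p lam (fun y => f y - Set.indicator (ball (0 : EuclideanSpace ℝ (Fin n)) k) f y) x r
      ≤ morreyM n p lam f x r := by
  rw [morreyM_tail hp, morreyM]
  refine mul_le_mul_of_nonneg_left ?_ (Real.rpow_nonneg hr.le _)
  exact setIntegral_mono_set (hf x r hr)
    (Eventually.of_forall fun y => Real.rpow_nonneg (abs_nonneg _) _)
    (Set.inter_subset_left.eventuallyLE)

/-- Covering estimate: integrals of `|f|^p χ_{‖y‖ ≥ k}` over balls of radius `b` are controlled by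
those over unit balls, the constant being the size of a finite cover of `B(0, b)` by unit balls. -/
lemma exists_tail_integral_le (n : ℕ) (b : ℝ) :
    ∃ m : ℕ, ∀ (p C : ℝ) (f : EuclideanSpace ℝ (Fin n) → ℝ), LocIntPow n p f →
      (∀ x, ∫ y in ball x 1, |f y| ^ p ≤ C) → ∀ (k : ℕ) (x : EuclideanSpace ℝ (Fin n)),
      ∫ y in ball x b ∩ {y | (k : ℝ) ≤ ‖y‖}, |f y| ^ p ≤ m * morreyA n p k f := by
  obtain ⟨t, -, htf, hcov⟩ := (isCompact_closedBall (0 : EuclideanSpace ℝ (Fin n)) b).finite_cover_balls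
    one_pos
  refine ⟨htf.toFinset.card, fun p C f hf hC k x => ?_⟩
  set S := {y : EuclideanSpace ℝ (Fin n) | (k : ℝ) ≤ ‖y‖} with hS
  have hSm : MeasurableSet S := measurableSet_norm_ge n k
  have hnn : ∀ y, 0 ≤ |f y| ^ p := fun y => Real.rpow_nonneg (abs_nonneg _) _
  have hle : ∀ z, ∫ y in ball z 1 ∩ S, |f y| ^ p ≤ morreyA n p k f := fun z => by
    refine le_ciSup (f := fun z => ∫ y in ball z 1 ∩ S, |f y| ^ p) ⟨C, ?_⟩ z
    rintro _ ⟨w, rfl⟩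
    exact (setIntegral_mono_set (hf w 1 one_pos) (Eventually.of_forall hnn)
      (Set.inter_subset_left.eventuallyLE)).trans (hC w)
  have hint : ∀ z, Integrable ((ball z 1 ∩ S).indicator fun y => |f y| ^ p) := fun z =>
    (integrable_indicator_iff (measurableSet_ball.inter hSm)).2
      ((hf z 1 one_pos).mono_set Set.inter_subset_left)
  have hpt : ∀ y, (ball x b ∩ S).indicator (fun y => |f y| ^ p) y ≤
      ∑ c ∈ htf.toFinset, (ball (x + c) 1 ∩ S).indicator (fun y => |f y| ^ p) y := by
    intro y
    have hterm : ∀ c ∈ htf.toFinset,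
        0 ≤ (ball (x + c) 1 ∩ S).indicator (fun y => |f y| ^ p) y :=
      fun c _ => Set.indicator_nonneg (fun y _ => hnn y) y
    by_cases hy : y ∈ ball x b ∩ S
    · have hyb : y - x ∈ closedBall (0 : EuclideanSpace ℝ (Fin n)) b := by
        have := mem_ball_iff_norm.1 hy.1
        simpa using this.le
      obtain ⟨c, hc, hyc⟩ := Set.mem_iUnion₂.1 (hcov hyb)
      have hmem : y ∈ ball (x + c) 1 ∩ S := by
        refine ⟨?_, hy.2⟩
        rw [mem_ball_iff_norm] at hyc ⊢
        rwa [← sub_sub]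
      refine le_trans (le_of_eq ?_) (Finset.single_le_sum hterm (htf.mem_toFinset.2 hc))
      rw [Set.indicator_of_mem hy, Set.indicator_of_mem hmem]
    · rw [Set.indicator_of_notMem hy]
      exact Finset.sum_nonneg hterm
  calc ∫ y in ball x b ∩ S, |f y| ^ p
      = ∫ y, (ball x b ∩ S).indicator (fun y => |f y| ^ p) y :=
        (integral_indicator (measurableSet_ball.inter hSm)).symm
    _ ≤ ∫ y, ∑ c ∈ htf.toFinset, (ball (x + c) 1 ∩ S).indicator (fun y => |f y| ^ p) y :=
        integral_mono_of_nonneg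
          (Eventually.of_forall fun y => Set.indicator_nonneg (fun y _ => hnn y) y)
          (integrable_finsetSum _ fun c _ => hint _) (Eventually.of_forall hpt)
    _ = ∑ c ∈ htf.toFinset, ∫ y in ball (x + c) 1 ∩ S, |f y| ^ p := by
        rw [integral_finsetSum _ fun c _ => hint _]
        exact Finset.sum_congr rfl fun c _ => integral_indicator (measurableSet_ball.inter hSm)
    _ ≤ ∑ c ∈ htf.toFinset, morreyA n p k f := Finset.sum_le_sum fun c _ => hle _
    _ = htf.toFinset.card * morreyA n p k f := by rw [Finset.sum_const, nsmul_eq_mul]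

theorem truncation_approx (n : ℕ) (hn : 1 ≤ n) (p lam : ℝ)
    (hp : 1 ≤ p) (hl0 : 0 ≤ lam) (hln : lam < (n : ℝ))
    (f : EuclideanSpace ℝ (Fin n) → ℝ) (hf : MemMorrey n p lam f)
    (h0 : VZero n p lam f) (hi : VInfty n p lam f) (hs : VStar n p f) :
    Tendsto (fun k : ℕ =>
        morreyNorm n p lam
          (fun y => f y - Set.indicator (ball (0 : EuclideanSpace ℝ (Fin n)) k) f y))
      atTop (nhds 0) := by
  obtain ⟨hloc, C, hC⟩ := hf
  have hp0 : p ≠ 0 := by linarith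
  have hnn : ∀ y, 0 ≤ |f y| ^ p := fun y => Real.rpow_nonneg (abs_nonneg _) _
  have hC1 : ∀ x, ∫ y in ball x 1, |f y| ^ p ≤ C := fun x => by
    simpa [morreyM] using hC x 1 one_pos
  have hsup : ∀ x r, 0 < r → morreyM n p lam f x r ≤ ⨆ x, morreyM n p lam f x r :=
    fun x r hr => le_ciSup (f := fun x => morreyM n p lam f x r)
      ⟨C, by rintro _ ⟨w, rfl⟩; exact hC w r hr⟩ x
  suffices H : Tendsto (fun k : ℕ => sSup {c : ℝ | ∃ x r, 0 < r ∧ c = morreyM n p lam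
      (fun y => f y - Set.indicator (ball (0 : EuclideanSpace ℝ (Fin n)) k) f y) x r})
      atTop (nhds 0) by
    have hq : (0 : ℝ) < 1 / p := by positivity
    have := H.rpow_const (p := 1 / p) (Or.inr hq.le)
    rwa [Real.zero_rpow hq.ne'] at this
  have hlow : ∀ k : ℕ, 0 ≤ sSup {c : ℝ | ∃ x r, 0 < r ∧ c = morreyM n p lam
      (fun y => f y - Set.indicator (ball (0 : EuclideanSpace ℝ (Fin n)) k) f y) x r} := by
    refine fun k => Real.sSup_nonneg ?_
    rintro _ ⟨x, r, hr, rfl⟩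
    rw [morreyM_tail hp0]
    exact mul_nonneg (Real.rpow_nonneg hr.le _) (integral_nonneg hnn)
  rw [Metric.tendsto_atTop']
  intro ε hε
  have hε2 : 0 < ε / 2 := half_pos hε
  obtain ⟨a, ha, hsmall⟩ := mem_nhdsGT_iff_exists_Ioo_subset.1 (h0.eventually_lt_const hε2)
  obtain ⟨b, hbig⟩ := eventually_atTop.1 (hi.eventually_lt_const hε2)
  obtain ⟨m, hm⟩ := exists_tail_integral_le n b
  have ha : 0 < a := ha
  have hlim : Tendsto (fun k : ℕ => a ^ (-lam) * (m * morreyA n p k f)) atTop (nhds 0) := by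
    simpa using (Tendsto.const_mul (m : ℝ) hs).const_mul (a ^ (-lam))
  obtain ⟨K, hK⟩ := eventually_atTop.1 (hlim.eventually_lt_const hε2)
  refine ⟨K, fun k hk => ?_⟩
  rw [Real.dist_0_eq_abs, abs_of_nonneg (hlow k)]
  refine lt_of_le_of_lt (csSup_le ⟨_, 0, 1, one_pos, rfl⟩ ?_) (half_lt_self hε)
  rintro _ ⟨x, r, hr, rfl⟩
  by_cases hra : r < a
  · have h1 : (⨆ x, morreyM n p lam f x r) < ε / 2 := hsmall ⟨hr, hra⟩
    exact ((morreyM_tail_le hp0 lam hloc k x hr).trans (hsup x r hr)).trans h1.le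
  by_cases hrb : b ≤ r
  · exact ((morreyM_tail_le hp0 lam hloc k x hr).trans (hsup x r hr)).trans (hbig r hrb).le
  push Not at hra hrb
  rw [morreyM_tail hp0]
  refine le_trans (mul_le_mul ?_ ?_ (integral_nonneg hnn) (Real.rpow_nonneg ha.le _))
    (hK k hk.le).le
  · exact Real.rpow_le_rpow_of_nonpos ha hra (neg_nonpos.2 hl0)
  · refine le_trans (setIntegral_mono_set ?_ (Eventually.of_forall hnn) ?_)
      (hm p C f hloc hC1 k x)
    · exact (hloc x b (hr.trans hrb)).mono_set Set.inter_subset_left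
    · exact (Set.inter_subset_inter_left _ (ball_subset_ball hrb.le)).eventuallyLE
end

section
/- Let n ≥ 1, 1 ≤ p < ∞ and 0 ≤ λ < n. If f belongs to the homogeneous Morrey space L^{p,λ}(ℝⁿ) and satisfies the three vanishing properties (V⁰), (V^∞) and (V*), then for every ε > 0 there exists an infinitely differentiable function g : ℝⁿ → ℝ with compact support such that ‖f − g‖_{p,λ} < ε. -/
/-!
The function is first truncated and then smoothed, so that no mollification of an unbounded function
is needed.

Truncation (`exists_truncation`): with `F = f` on `{‖y‖ < N, |f| ≤ H}` and `F = 0` elsewhere,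
`f - F` is small in Morrey norm for suitable `N`, `H`. Small radii are handled by `(V⁰)`, large radii
by `(V^∞)`, and intermediate ones by `(V*)` together with a covering by finitely many unit balls.

Smoothing (`exists_smooth_approx_of_bounded`): `F` is bounded with bounded support, so it is an `L^p`
limit of test functions `g` bounded by `H + 1`. Since `λ < n`, the sup bound makes small radii
negligible uniformly in `g`, and for the other radii `L^p` closeness suffices.

The definitions do not ask `f` itself to be measurable, only `|f| ^ p`, and the Bochner integral of a
non-measurable function is `0`. `exists_measurable_representative` replaces `f` by a measurable
function `u` with `|u| = |f|` a.e. for which `∫_B |f - g| ^ p ≤ ∫_B |u - g| ^ p` for every ball `B`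
and every continuous `g`.
-/

open MeasureTheory Metric Filter Topology

lemma abs_sub_rpow_le {p : ℝ} (hp : 1 ≤ p) (a b c : ℝ) :
    |a - c| ^ p ≤ 2 ^ p * (|a - b| ^ p + |b - c| ^ p) := by
  have hp0 : 0 ≤ p := by linarith
  have key : ∀ t : ℝ, 0 ≤ t → |a - b| ≤ t → |b - c| ≤ t →
      t ^ p ≤ |a - b| ^ p + |b - c| ^ p → |a - c| ^ p ≤ 2 ^ p * (|a - b| ^ p + |b - c| ^ p) := by
    intro t ht h1 h2 h3
    calc |a - c| ^ p ≤ (2 * t) ^ p := by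
          refine Real.rpow_le_rpow (abs_nonneg _) ?_ hp0
          have := abs_sub_le a b c
          linarith
      _ = 2 ^ p * t ^ p := Real.mul_rpow (by norm_num) ht
      _ ≤ _ := by gcongr
  have h1 : 0 ≤ |a - b| ^ p := by positivity
  have h2 : 0 ≤ |b - c| ^ p := by positivity
  rcases le_total |a - b| |b - c| with h | h
  · exact key _ (abs_nonneg _) h le_rfl (by linarith)
  · exact key _ (abs_nonneg _) le_rfl h (by linarith)

lemma setIntegral_union_le_add {α : Type*} [MeasurableSpace α] {μ : Measure α} {h : α → ℝ}
    (hn : ∀ y, 0 ≤ h y) {s t : Set α} (hs : IntegrableOn h s μ) (ht : IntegrableOn h t μ) :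
    ∫ y in s ∪ t, h y ∂μ ≤ (∫ y in s, h y ∂μ) + ∫ y in t, h y ∂μ := by
  rw [← integral_add_measure hs ht]
  exact integral_mono_measure (Measure.restrict_union_le _ _) (ae_of_all _ hn)
    (integrable_add_measure.2 ⟨hs, ht⟩)

lemma setIntegral_biUnion_le_card_mul {α ι : Type*} [MeasurableSpace α] {μ : Measure α}
    {h : α → ℝ} (hn : ∀ y, 0 ≤ h y) (t : Finset ι) {s : ι → Set α} {A : ℝ}
    (hs : ∀ i ∈ t, IntegrableOn h (s i) μ) (hA : ∀ i ∈ t, ∫ y in s i, h y ∂μ ≤ A) :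
    ∫ y in ⋃ i ∈ t, s i, h y ∂μ ≤ t.card * A := by
  classical
  induction t using Finset.induction_on with
  | empty => simp
  | insert a t ha ih =>
    have h1 : IntegrableOn h (⋃ i ∈ t, s i) μ :=
      (integrableOn_finset_iUnion).2 fun i hi => hs i (Finset.mem_insert_of_mem hi)
    have h2 := setIntegral_union_le_add hn (hs a (Finset.mem_insert_self _ _)) h1
    have h3 := ih (fun i hi => hs i (Finset.mem_insert_of_mem hi))
      (fun i hi => hA i (Finset.mem_insert_of_mem hi))
    have h4 := hA a (Finset.mem_insert_self _ _)
    rw [Finset.set_biUnion_insert, Finset.card_insert_of_notMem ha]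
    push_cast
    linarith

/-- `LocIntPow` makes `|f| ^ p` measurable but not `f`. This lemma supplies a measurable `u` with
`|u| = |f|` a.e. such that approximating `u` is enough to approximate `f`. The function `u` is
`|f|` on the measurable hull `P` of `{0 < f}` and `-|f|` elsewhere. If `|f - g| ^ p` is not
measurable on a ball, its Bochner integral there is `0`. If it is, polarisation makes `f` measurable
on `{g ≠ 0}` inside the ball, where `P` then agrees with `{0 < f}` a.e., so `u = f` there; on
`{g = 0}` only `|f| = |u|` matters. -/
lemma exists_measurable_representative {n : ℕ} {p : ℝ} (hp : 1 ≤ p)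
    {f : EuclideanSpace ℝ (Fin n) → ℝ} (hf : LocIntPow n p f) :
    ∃ u : EuclideanSpace ℝ (Fin n) → ℝ, Measurable u ∧ (∀ᵐ y, |u y| = |f y|) ∧
      ∀ g : EuclideanSpace ℝ (Fin n) → ℝ, Continuous g → ∀ x r,
        ∫ y in ball x r, |f y - g y| ^ p ≤ ∫ y in ball x r, |u y - g y| ^ p := by
  classical
  have hp0 : p ≠ 0 := by linarith
  have hloc : LocallyIntegrable (fun y => |f y| ^ p) volume := fun x =>
    ⟨ball x 1, ball_mem_nhds x one_pos, hf x 1 one_pos⟩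
  have hab : AEMeasurable (fun y => |f y|) volume := by
    have h := hloc.aestronglyMeasurable.aemeasurable.pow_const (1 / p)
    refine h.congr (ae_of_all _ fun y => ?_)
    simp only [one_div]
    exact Real.rpow_rpow_inv (abs_nonneg _) hp0
  set v := hab.mk _ with hv
  have hvm : Measurable v := hab.measurable_mk
  have hve : ∀ᵐ y, |f y| = v y := hab.ae_eq_mk
  set P : Set (EuclideanSpace ℝ (Fin n)) := toMeasurable volume {y | 0 < f y} with hP
  have hPm : MeasurableSet P := measurableSet_toMeasurable _ _
  have hsub : {y | 0 < f y} ⊆ P := subset_toMeasurable _ _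
  refine ⟨fun y => if y ∈ P then v y else - v y, Measurable.ite hPm hvm hvm.neg, ?_, ?_⟩
  · filter_upwards [hve] with y hy
    split_ifs <;> simp [← hy]
  · intro g hg x r
    by_cases hm : AEStronglyMeasurable (fun y => |f y - g y| ^ p) (volume.restrict (ball x r))
    swap
    · rw [integral_non_aestronglyMeasurable hm]
      exact integral_nonneg fun y => by positivity
    refine le_of_eq (integral_congr_ae ?_)
    have hgm : Measurable g := hg.measurable
    have hd : AEMeasurable (fun y => |f y - g y|) (volume.restrict (ball x r)) := by
      have h := hm.aemeasurable.pow_const (1 / p)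
      refine h.congr (ae_of_all _ fun y => ?_)
      simp only [one_div]
      exact Real.rpow_rpow_inv (abs_nonneg _) hp0
    -- polarisation `2 f g = |f|² + g² - |f - g|²`, multiplied once more by `g`
    have hfg : AEMeasurable (fun y => f y * g y ^ 2) (volume.restrict (ball x r)) := by
      have h := ((((hab.restrict (s := ball x r)).pow_const 2).add
        ((hgm.pow_const 2).aemeasurable)).sub (hd.pow_const 2)).mul (hgm.aemeasurable)
      refine (h.div_const 2).congr (ae_of_all _ fun y => ?_)
      simp only [Pi.add_apply, Pi.sub_apply, Pi.mul_apply, sq_abs]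
      ring
    have hSn : NullMeasurableSet {y | 0 < f y * g y ^ 2} (volume.restrict (ball x r)) :=
      hfg.nullMeasurableSet_preimage measurableSet_Ioi
    have hGm : MeasurableSet {y | g y ≠ 0} := hgm (measurableSet_singleton 0).compl
    have hSeq : {y | 0 < f y * g y ^ 2} = {y | 0 < f y} ∩ {y | g y ≠ 0} := by
      ext y
      simp only [Set.mem_ofPred_eq, Set.mem_inter_iff]
      constructor
      · intro h
        have hg0 : g y ≠ 0 := by
          rintro h0
          simp [h0] at h
        exact ⟨pos_of_mul_pos_left h (sq_nonneg _), hg0⟩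
      · rintro ⟨h1, h2⟩
        positivity
    have hae : {y | 0 < f y * g y ^ 2} =ᵐ[volume.restrict (ball x r)] (P ∩ {y | g y ≠ 0} : Set _) := by
      refine ae_eq_of_subset_of_measure_ge ?_ ?_ hSn ?_
      · rw [hSeq]
        exact Set.inter_subset_inter_left _ hsub
      · rw [hSeq, Measure.restrict_apply' measurableSet_ball,
          Measure.restrict_apply' measurableSet_ball, Set.inter_assoc, Set.inter_assoc,
          hP, Measure.measure_toMeasurable_inter_of_sFinite (hGm.inter measurableSet_ball)]
      · rw [Measure.restrict_apply' measurableSet_ball]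
        exact ((measure_mono Set.inter_subset_right).trans_lt measure_ball_lt_top).ne
    rw [hSeq] at hae
    filter_upwards [hae.mem_iff, ae_restrict_of_ae hve] with y hy1 hy2
    simp only [Set.mem_inter_iff, Set.mem_ofPred_eq] at hy1
    by_cases hg0 : g y = 0
    · simp only [hg0, sub_zero]
      split_ifs <;> simp [← hy2]
    · have h3 : 0 < f y ↔ y ∈ P := by tauto
      by_cases hyP : y ∈ P
      · simp [hyP, ← hy2, abs_of_pos (h3.2 hyP)]
      · have : f y ≤ 0 := not_lt.1 fun h => hyP (h3.1 h)
        simp [hyP, ← hy2, abs_of_nonpos this]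

/-- Cutting `f` off in space (`‖y‖ < N`) and in height (`|f| ≤ H`) costs little in Morrey norm.
The remainder is dominated by `f`, so `(V⁰)` and `(V^∞)` control small and large radii; for radii
in a compact range, a ball is covered by a fixed number of unit balls, so `(V*)` controls the part
far from the origin and dominated convergence the part of large height. -/
lemma exists_truncation {n : ℕ} {p lam : ℝ} (hp : 1 ≤ p) (hl0 : 0 ≤ lam)
    {f : EuclideanSpace ℝ (Fin n) → ℝ} (hfm : Measurable f) (hf : MemMorrey n p lam f)
    (h0 : VZero n p lam f) (hi : VInfty n p lam f) (hs : VStar n p f) {η : ℝ} (hη : 0 < η) :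
    ∃ N H : ℕ, ∀ x r, 0 < r →
      morreyM n p lam (fun y => f y - {y | ‖y‖ < N ∧ |f y| ≤ H}.indicator f y) x r ≤ η := by
  obtain ⟨hloc, C, hC⟩ := hf
  have hp0 : p ≠ 0 := by linarith
  have hnn : ∀ y, 0 ≤ |f y| ^ p := fun y => by positivity
  have hle : ∀ x r, 0 < r → morreyM n p lam f x r ≤ ⨆ z, morreyM n p lam f z r := fun x r hr =>
    le_ciSup (f := fun z => morreyM n p lam f z r) ⟨C, by rintro _ ⟨z, rfl⟩; exact hC z r hr⟩ x
  -- radii below `δ`, by `(V⁰)`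
  obtain ⟨δ, hδ, hδ'⟩ : ∃ δ > 0, ∀ x r, 0 < r → r < δ → morreyM n p lam f x r ≤ η := by
    have h := h0.eventually_lt_const hη
    obtain ⟨δ, hδ, h⟩ := mem_nhdsGT_iff_exists_Ioo_subset.1 h
    exact ⟨δ, hδ, fun x r hr hrδ => (hle x r hr).trans (h ⟨hr, hrδ⟩).le⟩
  -- radii above `R`, by `(V^∞)`
  obtain ⟨R, hR⟩ : ∃ R, ∀ x r, 0 < r → R ≤ r → morreyM n p lam f x r ≤ η := by
    obtain ⟨R, h⟩ := eventually_atTop.1 (hi.eventually_lt_const hη)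
    exact ⟨R, fun x r hr hrR => (hle x r hr).trans (h r hrR).le⟩
  obtain ⟨t₀, -, ht₀, hcov⟩ :=
    (isCompact_closedBall (0 : EuclideanSpace ℝ (Fin n)) R).finite_cover_balls one_pos
  lift t₀ to Finset (EuclideanSpace ℝ (Fin n)) using ht₀
  set θ := η * δ ^ lam / 2 with hθ
  have hθ0 : 0 < θ := by positivity
  -- cut-off in space, by `(V*)`
  obtain ⟨N, hN⟩ : ∃ N : ℕ, t₀.card * morreyA n p N f < θ := by
    have h : Tendsto (fun N : ℕ => t₀.card * morreyA n p N f) atTop (𝓝 (t₀.card * 0)) :=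
      hs.const_mul _
    rw [mul_zero] at h
    exact (h.eventually_lt_const hθ0).exists
  -- cut-off in height, by dominated convergence
  obtain ⟨H, hH⟩ : ∃ H : ℕ,
      ∫ y in ball (0 : EuclideanSpace ℝ (Fin n)) N ∩ {y | (H : ℝ) < |f y|}, |f y| ^ p < θ := by
    have hm : ∀ H : ℕ, MeasurableSet
        (ball (0 : EuclideanSpace ℝ (Fin n)) N ∩ {y | (H : ℝ) < |f y|}) := fun H =>
      measurableSet_ball.inter (measurableSet_lt measurable_const (by fun_prop))
    have h := tendsto_setIntegral_of_antitone (μ := volume) (f := fun y => |f y| ^ p) hm ?_ ⟨0, ?_⟩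
    · have he : (⋂ H : ℕ, ball (0 : EuclideanSpace ℝ (Fin n)) N ∩ {y | (H : ℝ) < |f y|}) = ∅ := by
        refine Set.eq_empty_of_forall_notMem fun y hy => ?_
        obtain ⟨k, hk⟩ := exists_nat_ge |f y|
        exact absurd (Set.mem_iInter.1 hy k).2 (not_lt.2 hk)
      rw [he, setIntegral_empty] at h
      exact (h.eventually_lt_const hθ0).exists
    · intro a b hab y hy
      have h1 : (a : ℝ) ≤ b := by exact_mod_cast hab
      have h2 : (b : ℝ) < |f y| := hy.2
      exact ⟨hy.1, h1.trans_lt h2⟩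
    · exact (hloc 0 (N + 1) (by positivity)).mono_set
        (Set.inter_subset_left.trans (ball_subset_ball (by linarith)))
  refine ⟨N, H, fun x r hr => ?_⟩
  set E : Set (EuclideanSpace ℝ (Fin n)) := {y | ‖y‖ < N ∧ |f y| ≤ H} with hE
  have hEm : MeasurableSet E :=
    (measurableSet_lt measurable_norm measurable_const).inter
      (measurableSet_le hfm.abs measurable_const)
  have hfun : (fun y => |f y - E.indicator f y| ^ p) = Eᶜ.indicator (fun y => |f y| ^ p) := by
    ext y
    by_cases hy : y ∈ E <;> simp [hy, hp0]
  have hM : morreyM n p lam (fun y => f y - E.indicator f y) x r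
      = r ^ (-lam) * ∫ y in ball x r ∩ Eᶜ, |f y| ^ p := by
    simp only [morreyM]
    rw [hfun, setIntegral_indicator hEm.compl]
  have hMle : morreyM n p lam (fun y => f y - E.indicator f y) x r ≤ morreyM n p lam f x r := by
    rw [hM, morreyM]
    have := setIntegral_mono_set (hloc x r hr) (ae_of_all _ hnn)
      (Set.inter_subset_left (s := ball x r) (t := Eᶜ)).eventuallyLE
    gcongr
  rcases lt_or_ge r δ with hrδ | hrδ
  · exact hMle.trans (hδ' x r hr hrδ)
  rcases le_or_gt R r with hrR | hrR
  · exact hMle.trans (hR x r hr hrR)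
  have hU : ∀ z ∈ t₀, IntegrableOn (fun y => |f y| ^ p)
      (ball (x + z) 1 ∩ {y : EuclideanSpace ℝ (Fin n) | (N : ℝ) ≤ ‖y‖}) volume := fun z _ =>
    (hloc (x + z) 1 one_pos).mono_set Set.inter_subset_left
  have hAle : ∀ z ∈ t₀,
      ∫ y in ball (x + z) 1 ∩ {y : EuclideanSpace ℝ (Fin n) | (N : ℝ) ≤ ‖y‖}, |f y| ^ p
        ≤ morreyA n p N f := by
    intro z _
    refine le_ciSup (f := fun w : EuclideanSpace ℝ (Fin n) =>
      ∫ y in ball w 1 ∩ {y : EuclideanSpace ℝ (Fin n) | (N : ℝ) ≤ ‖y‖}, |f y| ^ p) ⟨C, ?_⟩ (x + z)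
    rintro _ ⟨w, rfl⟩
    have h1 := hC w 1 one_pos
    simp only [morreyM, Real.one_rpow, one_mul] at h1
    exact (setIntegral_mono_set (hloc w 1 one_pos) (ae_of_all _ hnn)
      Set.inter_subset_left.eventuallyLE).trans h1
  have hUi : IntegrableOn (fun y => |f y| ^ p)
      (⋃ z ∈ t₀, ball (x + z) 1 ∩ {y : EuclideanSpace ℝ (Fin n) | (N : ℝ) ≤ ‖y‖}) volume :=
    integrableOn_finset_iUnion.2 hU
  have hVi : IntegrableOn (fun y => |f y| ^ p)
      (ball (0 : EuclideanSpace ℝ (Fin n)) N ∩ {y | (H : ℝ) < |f y|}) volume :=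
    (hloc 0 (N + 1) (by positivity)).mono_set
        (Set.inter_subset_left.trans (ball_subset_ball (by linarith)))
  have hsubset : ball x r ∩ Eᶜ ⊆
      (⋃ z ∈ t₀, ball (x + z) 1 ∩ {y : EuclideanSpace ℝ (Fin n) | (N : ℝ) ≤ ‖y‖}) ∪
        (ball (0 : EuclideanSpace ℝ (Fin n)) N ∩ {y | (H : ℝ) < |f y|}) := by
    rintro y ⟨hyb, hyE⟩
    rcases lt_or_ge ‖y‖ (N : ℝ) with hyN | hyN
    · right
      refine ⟨by simpa using hyN, ?_⟩
      by_contra hc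
      exact hyE ⟨hyN, not_lt.1 hc⟩
    · left
      have hyx : y - x ∈ closedBall (0 : EuclideanSpace ℝ (Fin n)) R := by
        rw [mem_closedBall_zero_iff, ← dist_eq_norm]
        exact ((mem_ball.1 hyb).trans hrR).le
      obtain ⟨z, hz, hyz⟩ := Set.mem_iUnion₂.1 (hcov hyx)
      refine Set.mem_iUnion₂.2 ⟨z, hz, ?_, hyN⟩
      rw [mem_ball, dist_eq_norm] at hyz ⊢
      rwa [← sub_sub]
  have hball : ∫ y in ball x r ∩ Eᶜ, |f y| ^ p ≤ η * δ ^ lam := by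
    have h1 := setIntegral_mono_set (hUi.union hVi) (ae_of_all _ hnn) hsubset.eventuallyLE
    have h2 := setIntegral_union_le_add hnn hUi hVi
    have h3 := setIntegral_biUnion_le_card_mul hnn t₀ hU hAle
    linarith
  rw [hM]
  calc r ^ (-lam) * ∫ y in ball x r ∩ Eᶜ, |f y| ^ p ≤ δ ^ (-lam) * (η * δ ^ lam) := by
        refine mul_le_mul (Real.rpow_le_rpow_of_nonpos hδ hrδ (by linarith)) hball
          (integral_nonneg hnn) (by positivity)
    _ = η := by
        rw [Real.rpow_neg hδ.le]
        field_simp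

/-- A bounded function vanishing off a ball is a Morrey limit of test functions: an approximant
obeying the same sup bound up to `1` makes the Morrey quantity `O(r ^ (n - λ))`, which is harmless
for `r ≤ ρ`, while for `r ≥ ρ` the Morrey quantity is at most `ρ ^ (-λ)` times the `p`-th power of
the `L^p` distance. -/
lemma exists_smooth_approx_of_bounded {n : ℕ} (hn : 1 ≤ n) {p lam : ℝ} (hp : 1 ≤ p)
    (hl0 : 0 ≤ lam) (hln : lam < n) {F : EuclideanSpace ℝ (Fin n) → ℝ} (hFm : Measurable F)
    {H N : ℝ} (hH : 0 ≤ H) (hFH : ∀ y, |F y| ≤ H) (hFN : ∀ y, N ≤ ‖y‖ → F y = 0)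
    {η : ℝ} (hη : 0 < η) :
    ∃ g : EuclideanSpace ℝ (Fin n) → ℝ, ContDiff ℝ (⊤ : ℕ∞) g ∧ HasCompactSupport g ∧
      ∀ x r, 0 < r → morreyM n p lam (fun y => F y - g y) x r ≤ η := by
  have hp0 : 0 < p := by linarith
  have : Nonempty (Fin n) := ⟨⟨0, hn⟩⟩
  set V := volume.real (ball (0 : EuclideanSpace ℝ (Fin n)) 1) with hV
  set A := (2 * H + 1) ^ p * V with hA
  have hA0 : 0 ≤ A := by positivity
  -- `ρ` is the radius below which the sup bound alone suffices
  obtain ⟨ρ, hρ, hρ'⟩ : ∃ ρ > 0, A * ρ ^ ((n : ℝ) - lam) ≤ η := by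
    have h : Tendsto (fun r : ℝ => A * r ^ ((n : ℝ) - lam)) (𝓝[>] 0) (𝓝 (A * 0)) := by
      refine Tendsto.const_mul _ ?_
      have h1 := (Real.continuousAt_rpow_const 0 ((n : ℝ) - lam) (Or.inr (by linarith))).tendsto
      rw [Real.zero_rpow (by linarith)] at h1
      exact h1.mono_left nhdsWithin_le_nhds
    rw [mul_zero] at h
    obtain ⟨ρ, h1, h2⟩ := ((h.eventually_le_const hη).and self_mem_nhdsWithin).exists
    exact ⟨ρ, h2, h1⟩
  set θ := η * ρ ^ lam / 2 ^ p / 2 with hθ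
  have hθ0 : 0 < θ := by positivity
  have hFLp : MemLp F (ENNReal.ofReal p) volume := by
    have h1 : MemLp F (ENNReal.ofReal p) (volume.restrict (ball 0 N)) :=
      have : IsFiniteMeasure (volume.restrict (ball (0 : EuclideanSpace ℝ (Fin n)) N)) :=
        isFiniteMeasure_restrict.2 measure_ball_lt_top.ne
      MemLp.of_bound hFm.aestronglyMeasurable H (ae_of_all _ hFH)
    rw [← memLp_indicator_iff_restrict measurableSet_ball] at h1
    convert h1 using 1
    ext y
    by_cases hy : y ∈ ball (0 : EuclideanSpace ℝ (Fin n)) N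
    · simp [hy]
    · rw [Set.indicator_of_notMem hy]
      exact hFN y (by simpa using hy)
  obtain ⟨c, hcs, hcle, hcc, hcLp⟩ :=
    hFLp.exists_hasCompactSupport_integral_rpow_sub_le hp0 hθ0
  simp only [Real.norm_eq_abs] at hcle
  have hFc : Integrable (fun y => |F y - c y| ^ p) volume := by
    have h := (hFLp.sub hcLp).integrable_norm_rpow (by simpa using hp0) ENNReal.ofReal_ne_top
    simpa [ENNReal.toReal_ofReal hp0.le] using h
  -- clipping `c` to `[-H, H]` does not move it away from `F`
  set d : EuclideanSpace ℝ (Fin n) → ℝ := fun y => max (-H) (min H (c y)) with hd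
  have hdc : Continuous d := by fun_prop
  have hdH : ∀ y, |d y| ≤ H := fun y =>
    abs_le.2 ⟨le_max_left _ _, max_le (by linarith) (min_le_left _ _)⟩
  have hdF : ∀ y, |F y - d y| ≤ |F y - c y| := by
    intro y
    have h1 := abs_le.1 (hFH y)
    have h2 : F y = max (-H) (min H (F y)) := by
      rw [min_eq_right h1.2, max_eq_right h1.1]
    calc |F y - d y| = |max (-H) (min H (F y)) - max (-H) (min H (c y))| := by rw [← h2]
      _ ≤ |min H (F y) - min H (c y)| := by
        simpa [max_comm] using abs_max_sub_max_le_abs (min H (F y)) (min H (c y)) (-H)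
      _ ≤ |F y - c y| := by
        have := abs_min_sub_min_le_max H (F y) H (c y)
        simpa using this
  have hdsupp : Function.support d ⊆ tsupport c := by
    refine Set.Subset.trans (fun y hy => ?_) (subset_tsupport c)
    rw [Function.mem_support] at hy ⊢
    intro h0
    apply hy
    simp [hd, h0, hH]
  set K := tsupport c with hK
  have hKc : IsCompact K := hcs
  set W := volume.real K with hW
  -- uniform error of the smoothing step; `τ ≤ 1` ensures `τ ^ p ≤ τ`
  set τ := min 1 (θ / (W + 1)) with hτ
  have hW0 : 0 ≤ W := measureReal_nonneg
  have hτ0 : 0 < τ := lt_min one_pos (by positivity)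
  have hτ1 : τ ≤ 1 := min_le_left _ _
  have hτW : τ * W ≤ θ := by
    have : τ * (W + 1) ≤ θ := (le_div_iff₀ (by positivity)).1 (min_le_right _ _)
    nlinarith
  obtain ⟨g, hgs, hgd, hgsupp⟩ :=
    hdc.exists_contDiff_approx (⊤ : ℕ∞) (ε := fun _ => τ) continuous_const (fun _ => hτ0)
  have hgK : Function.support g ⊆ K := hgsupp.trans hdsupp
  refine ⟨g, hgs, HasCompactSupport.intro hKc fun y hy => ?_, ?_⟩
  · by_contra h
    exact hy (hgK h)
  have hgdabs : ∀ y, |d y - g y| < τ := fun y => by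
    have := hgd y
    rwa [dist_comm, Real.dist_eq] at this
  have hdg : ∀ y, |d y - g y| ^ p ≤ K.indicator (fun _ => τ) y := by
    intro y
    by_cases hy : y ∈ K
    · rw [Set.indicator_of_mem hy]
      calc |d y - g y| ^ p ≤ τ ^ p :=
            Real.rpow_le_rpow (abs_nonneg _) (hgdabs y).le hp0.le
        _ ≤ τ ^ (1 : ℝ) := Real.rpow_le_rpow_of_exponent_ge hτ0 hτ1 hp
        _ = τ := Real.rpow_one τ
    · have h1 : d y = 0 := by
        by_contra h
        exact hy (hdsupp h)
      have h2 : g y = 0 := by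
        by_contra h
        exact hy (hgK h)
      simp [h1, h2, hy, hp0.ne']
  have hKi : Integrable (K.indicator fun _ => τ) volume := by
    rw [integrable_indicator_iff hKc.measurableSet]
    exact integrableOn_const hKc.measure_lt_top.ne
  have hpt : ∀ y, |F y - g y| ^ p ≤ 2 ^ p * (|F y - c y| ^ p + K.indicator (fun _ => τ) y) := by
    intro y
    have h1 : |F y - d y| ^ p ≤ |F y - c y| ^ p :=
      Real.rpow_le_rpow (abs_nonneg _) (hdF y) hp0.le
    have h2 := hdg y
    refine (abs_sub_rpow_le hp (F y) (d y) (g y)).trans ?_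
    gcongr
  have hbi : Integrable (fun y => 2 ^ p * (|F y - c y| ^ p + K.indicator (fun _ => τ) y))
      volume := (hFc.add hKi).const_mul _
  have hgm : Measurable g := hgs.continuous.measurable
  have hFg : Integrable (fun y => |F y - g y| ^ p) volume := by
    refine hbi.mono' (((hFm.sub hgm).abs.pow_const p).aestronglyMeasurable)
      (ae_of_all _ fun y => ?_)
    rw [Real.norm_of_nonneg (by positivity)]
    exact hpt y
  have hglob : ∫ y, |F y - g y| ^ p ≤ η * ρ ^ lam := by
    calc ∫ y, |F y - g y| ^ p
        ≤ ∫ y, 2 ^ p * (|F y - c y| ^ p + K.indicator (fun _ => τ) y) :=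
          integral_mono hFg hbi hpt
      _ = 2 ^ p * ((∫ y, |F y - c y| ^ p) + τ * W) := by
          rw [integral_const_mul, integral_add hFc hKi, integral_indicator hKc.measurableSet,
            setIntegral_const, smul_eq_mul, mul_comm W]
      _ ≤ 2 ^ p * (θ + θ) := by gcongr
      _ = η * ρ ^ lam := by
          rw [hθ]
          field_simp
          ring
  have hnn : ∀ y, 0 ≤ |F y - g y| ^ p := fun y => by positivity
  intro x r hr
  rw [morreyM]
  rcases le_total r ρ with hrρ | hrρ
  · have hbd : ∀ y, |F y - g y| ^ p ≤ (2 * H + 1) ^ p := by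
      intro y
      refine Real.rpow_le_rpow (abs_nonneg _) ?_ hp0.le
      have h1 := abs_sub_le (F y) (d y) (g y)
      have h2 := hgdabs y
      have h3 := abs_sub (F y) (d y)
      linarith [hFH y, hdH y]
    have hvol : volume.real (ball x r) = r ^ (n : ℝ) * V := by
      rw [measureReal_def, Measure.addHaar_ball _ _ hr.le, ENNReal.toReal_mul,
        ENNReal.toReal_ofReal (by positivity), finrank_euclideanSpace_fin, Real.rpow_natCast]
      rfl
    have hball : ∫ y in ball x r, |F y - g y| ^ p ≤ (2 * H + 1) ^ p * (r ^ (n : ℝ) * V) := by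
      calc ∫ y in ball x r, |F y - g y| ^ p ≤ ∫ _ in ball x r, (2 * H + 1) ^ p :=
            integral_mono hFg.integrableOn
              (integrableOn_const measure_ball_lt_top.ne) hbd
        _ = _ := by rw [setIntegral_const, smul_eq_mul, hvol, mul_comm]
    calc r ^ (-lam) * ∫ y in ball x r, |F y - g y| ^ p
        ≤ r ^ (-lam) * ((2 * H + 1) ^ p * (r ^ (n : ℝ) * V)) := by gcongr
      _ = A * r ^ ((n : ℝ) - lam) := by
          rw [hA, sub_eq_add_neg, Real.rpow_add hr]
          ring
      _ ≤ A * ρ ^ ((n : ℝ) - lam) := by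
          have : 0 ≤ (n : ℝ) - lam := by linarith
          gcongr
      _ ≤ η := hρ'
  · calc r ^ (-lam) * ∫ y in ball x r, |F y - g y| ^ p ≤ ρ ^ (-lam) * (η * ρ ^ lam) := by
          refine mul_le_mul (Real.rpow_le_rpow_of_nonpos hρ hrρ (by linarith)) ?_
            (integral_nonneg hnn) (by positivity)
          exact (setIntegral_le_integral hFg (ae_of_all _ hnn)).trans hglob
      _ = η := by
          rw [Real.rpow_neg hρ.le]
          field_simp

theorem smooth_compact_support_approx (n : ℕ) (hn : 1 ≤ n) (p lam : ℝ)
    (hp : 1 ≤ p) (hl0 : 0 ≤ lam) (hln : lam < (n : ℝ))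
    (f : EuclideanSpace ℝ (Fin n) → ℝ) (hf : MemMorrey n p lam f)
    (h0 : VZero n p lam f) (hi : VInfty n p lam f) (hs : VStar n p f) :
    ∀ ε : ℝ, 0 < ε →
      ∃ g : EuclideanSpace ℝ (Fin n) → ℝ, ContDiff ℝ (⊤ : ℕ∞) g ∧ HasCompactSupport g ∧
        morreyNorm n p lam (fun y => f y - g y) < ε := by
  intro ε hε
  have hp0 : 0 < p := by linarith
  obtain ⟨u, hum, hua, hu⟩ := exists_measurable_representative hp hf.1
  have hpow : (fun y => |u y| ^ p) =ᵐ[volume] fun y => |f y| ^ p := by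
    filter_upwards [hua] with y hy
    rw [hy]
  -- all hypotheses on `f` only involve `|f| ^ p` up to null sets, so they pass to `u`
  have hM : morreyM n p lam u = morreyM n p lam f := by
    ext x r
    rw [morreyM, morreyM, integral_congr_ae (ae_restrict_of_ae hpow)]
  have hAeq : ∀ N, morreyA n p N u = morreyA n p N f := by
    intro N
    simp only [morreyA]
    congr 1
    ext x
    exact integral_congr_ae (ae_restrict_of_ae hpow)
  have hul : LocIntPow n p u := fun x r hr =>
    (hf.1 x r hr).congr (ae_restrict_of_ae hpow.symm)
  have huf : MemMorrey n p lam u := ⟨hul, by rw [hM]; exact hf.2⟩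
  have hu0 : VZero n p lam u := by rw [VZero, hM]; exact h0
  have hui : VInfty n p lam u := by rw [VInfty, hM]; exact hi
  have hus : VStar n p u := by simp only [VStar, hAeq]; exact hs
  set η := (ε / 2) ^ p / 2 ^ p / 2 with hη
  have hη0 : 0 < η := by positivity
  obtain ⟨N, H, hNH⟩ := exists_truncation hp hl0 hum huf hu0 hui hus hη0
  set E : Set (EuclideanSpace ℝ (Fin n)) := {y | ‖y‖ < N ∧ |u y| ≤ H} with hE
  have hEm : MeasurableSet E :=
    (measurableSet_lt measurable_norm measurable_const).inter
      (measurableSet_le hum.abs measurable_const)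
  have hFm : Measurable (E.indicator u) := hum.indicator hEm
  have hH0 : (0 : ℝ) ≤ H := Nat.cast_nonneg H
  have hFH : ∀ y, |E.indicator u y| ≤ H := by
    intro y
    by_cases hy : y ∈ E
    · rw [Set.indicator_of_mem hy]
      exact hy.2
    · simp [hy]
  obtain ⟨g, hgs, hgc, hg⟩ := exists_smooth_approx_of_bounded (N := N) hn hp hl0 hln hFm hH0 hFH
    (fun y hy => Set.indicator_of_notMem (fun h => absurd h.1 (not_lt.2 hy)) u) hη0
  refine ⟨g, hgs, hgc, ?_⟩
  have hgm : Measurable g := hgs.continuous.measurable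
  obtain ⟨G, hG⟩ := hgc.exists_bound_of_continuous hgs.continuous
  have key : ∀ x r, 0 < r → morreyM n p lam (fun y => f y - g y) x r ≤ (ε / 2) ^ p := by
    intro x r hr
    have h1 := hNH x r hr
    have h2 := hg x r hr
    rw [morreyM] at h1 h2 ⊢
    have i1 : IntegrableOn (fun y => |u y - E.indicator u y| ^ p) (ball x r) volume := by
      refine (hul x r hr).mono' (((hum.sub hFm).abs.pow_const p).aestronglyMeasurable)
        (ae_of_all _ fun y => ?_)
      rw [Real.norm_of_nonneg (by positivity)]
      refine Real.rpow_le_rpow (abs_nonneg _) ?_ hp0.le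
      by_cases hy : y ∈ E <;> simp [hy]
    have i2 : IntegrableOn (fun y => |E.indicator u y - g y| ^ p) (ball x r) volume := by
      refine Measure.integrableOn_of_bounded (M := ((H : ℝ) + G) ^ p) measure_ball_lt_top.ne
        (((hFm.sub hgm).abs.pow_const p).aestronglyMeasurable) (ae_of_all _ fun y => ?_)
      rw [Real.norm_of_nonneg (by positivity)]
      refine Real.rpow_le_rpow (abs_nonneg _) ?_ hp0.le
      exact (abs_sub _ _).trans (add_le_add (hFH y) (hG y))
    have i3 : IntegrableOn (fun y => 2 ^ p * (|u y - E.indicator u y| ^ p +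
        |E.indicator u y - g y| ^ p)) (ball x r) volume := (i1.add i2).const_mul _
    have hball : ∫ y in ball x r, |f y - g y| ^ p ≤ 2 ^ p *
        ((∫ y in ball x r, |u y - E.indicator u y| ^ p) +
          ∫ y in ball x r, |E.indicator u y - g y| ^ p) := by
      refine (hu g hgs.continuous x r).trans ?_
      rw [← integral_add i1 i2, ← integral_const_mul]
      exact integral_mono_of_nonneg (ae_of_all _ fun y => by positivity) i3
        (ae_of_all _ fun y => abs_sub_rpow_le hp _ _ _)
    calc r ^ (-lam) * ∫ y in ball x r, |f y - g y| ^ p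
        ≤ r ^ (-lam) * (2 ^ p * ((∫ y in ball x r, |u y - E.indicator u y| ^ p) +
          ∫ y in ball x r, |E.indicator u y - g y| ^ p)) := by gcongr
      _ = 2 ^ p * (r ^ (-lam) * (∫ y in ball x r, |u y - E.indicator u y| ^ p) +
          r ^ (-lam) * ∫ y in ball x r, |E.indicator u y - g y| ^ p) := by ring
      _ ≤ 2 ^ p * (η + η) := by gcongr
      _ = (ε / 2) ^ p := by
          rw [hη]
          field_simp
          ring
  have hsup : sSup {c : ℝ | ∃ x r, 0 < r ∧ c = morreyM n p lam (fun y => f y - g y) x r}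
      ≤ (ε / 2) ^ p := by
    refine Real.sSup_le ?_ (by positivity)
    rintro _ ⟨x, r, hr, rfl⟩
    exact key x r hr
  have hsup0 : 0 ≤ sSup {c : ℝ | ∃ x r, 0 < r ∧ c = morreyM n p lam (fun y => f y - g y) x r} := by
    refine Real.sSup_nonneg ?_
    rintro _ ⟨x, r, hr, rfl⟩
    exact mul_nonneg (by positivity) (integral_nonneg fun y => by positivity)
  calc morreyNorm n p lam (fun y => f y - g y) ≤ ((ε / 2) ^ p) ^ (1 / p) :=
        Real.rpow_le_rpow hsup0 hsup (by positivity)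
    _ = ε / 2 := by
        rw [one_div]
        exact Real.rpow_rpow_inv (by positivity) hp0.ne'
    _ < ε := by linarith
end
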